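/- Let (A, φ) be a noncommutative probability space with monotone cumulants {h_n}. Then for every n ≥ 1 and all a_1,…,a_n ∈ A one has h_n(a_1,…,a_n) = Σ_{t ∈ ST(n)} ω(sk(t)) · φ_{π(t)}(a_1,…,a_n). -/

import Mathlib

open scoped BigOperators

/-- Planar rooted trees (rose trees). -/
inductive PTree : Type
  | node : List PTree → PTree

namespace PTree

/-- The single-vertex tree (a leaf). -/
abbrev leaf : PTree := .node []

/-- Subtree at a given path from the root (entries select children). -/
def subtreeAt : List ℕ → PTree → Option PTree
  | [], t => some t
  | i :: p, node cs => (cs[i]?).bind (subtreeAt p)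

/-- `p` is (the path of) a vertex of `t`. -/
def IsVertex (t : PTree) (p : List ℕ) : Prop := (subtreeAt p t).isSome

/-- `p` is a leaf of `t`. -/
def IsLeafAt (t : PTree) (p : List ℕ) : Prop := subtreeAt p t = some leaf

/-- `p` is an internal (non-leaf) vertex of `t`. -/
def IsInternalAt (t : PTree) (p : List ℕ) : Prop :=
  ∃ cs, subtreeAt p t = some (node cs) ∧ cs ≠ []

/-- Schröder trees: every internal vertex has at least two children. -/
inductive IsSchroder : PTree → Prop
  | leaf : IsSchroder (node [])
  | node (cs : List PTree) : 2 ≤ cs.length → (∀ c ∈ cs, IsSchroder c) → IsSchroder (node cs)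

/-- Number of leaves of a tree. -/
noncomputable def numLeaves (t : PTree) : ℕ := Nat.card {p : List ℕ // IsLeafAt t p}

/-- Number of sectors between consecutive leaves. -/
noncomputable def numSectors (t : PTree) : ℕ := numLeaves t - 1

/-- Number of internal vertices. -/
noncomputable def numInternal (t : PTree) : ℕ := Nat.card {p : List ℕ // IsInternalAt t p}

/-- The set of Schröder trees with `n+1` leaves. -/
def ST (n : ℕ) : Set PTree := {t | IsSchroder t ∧ numLeaves t = n + 1}

/-- Number of surjective strictly order-preserving maps from the poset of internal
vertices of `t` (i.e. the vertex poset of the skeleton `sk(t)`, with the root minimal,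
the order being the ancestor/prefix order) onto `{1, …, k}`. This is `ω_k(sk(t))`. -/
noncomputable def omegaSkK (t : PTree) (k : ℕ) : ℕ :=
  Nat.card {f : {p : List ℕ // IsInternalAt t p} → Fin k //
    Function.Surjective f ∧ ∀ v w, v.1 <+: w.1 → v ≠ w → f v < f w}

/-- The Murua coefficient `ω(sk(t))` of the skeleton of `t`. -/
noncomputable def omegaSk (t : PTree) : ℂ :=
  ∑ k ∈ Finset.Icc 1 (numInternal t), ((-1 : ℂ) ^ (k + 1) / (k : ℂ)) * (omegaSkK t k : ℂ)

/-- The subtree of `t` at path `p` (junk value: a leaf). -/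
noncomputable def subtree! (t : PTree) (p : List ℕ) : PTree := (subtreeAt p t).getD leaf

/-- Number of leaves of `t` strictly to the left of the subtree at `p`. -/
noncomputable def leavesBefore (t : PTree) (p : List ℕ) : ℕ :=
  Nat.card {q : List ℕ // IsLeafAt t q ∧ List.Lex (· < ·) q p ∧ ¬ p <+: q}

/-- Sector number `i` (0-indexed: the sector between the `(i+1)`-st and `(i+2)`-nd leaves of `t`)
lies strictly inside the subtree of `t` rooted at `p`. -/
def SectorIn (t : PTree) (p : List ℕ) (i : ℕ) : Prop :=
  leavesBefore t p ≤ i ∧ i + 2 ≤ leavesBefore t p + numLeaves (subtree! t p)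

/-- The internal vertex `v` of `t` owns sector `i`: the sector lies in the corolla at `v`,
i.e. inside the subtree at `v` but not inside the subtree at any strictly deeper vertex. -/
def OwnsSector (t : PTree) (v : List ℕ) (i : ℕ) : Prop :=
  IsInternalAt t v ∧ SectorIn t v i ∧
    ∀ w, IsInternalAt t w → v <+: w → w ≠ v → ¬ SectorIn t w i

/-- Sectors `i` and `j` belong to the same block of the noncrossing partition `π(t)`. -/
def SameOwner (t : PTree) (i j : ℕ) : Prop := ∃ v, OwnsSector t v i ∧ OwnsSector t v j

open Classical in
/-- `φ_{π(t)}(a_1,…,a_n)`: the product over the blocks of the noncrossing partition `π(t)`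
(one block per internal vertex `v`, consisting of the sectors owned by `v`) of `φ` applied to
the ordered product of the corresponding letters of `w`. -/
noncomputable def phiPi {A : Type*} [Ring A] (φ : A → ℂ) (t : PTree) (w : List A) : ℂ :=
  ∏ᶠ v ∈ {v : List ℕ | IsInternalAt t v},
    φ ((((List.range w.length).filter fun i => OwnsSector t v i).map fun i => w.getD i 0).prod)

/-- A corolla: a root whose (at least two) children are all leaves. -/
def corolla (m : ℕ) : PTree := node (List.replicate m leaf)

/-- `t` is a corolla. -/
def IsCorolla (t : PTree) : Prop := ∃ m, 2 ≤ m ∧ t = corolla m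

/-- Graft a tree `s` onto the leftmost leaf of `t`. -/
def graftLeftmost : PTree → PTree → PTree
  | node [], s => s
  | node (c :: cs), s => node (graftLeftmost c s :: cs)

/-- Trees obtained from the single-vertex tree by repeatedly grafting a corolla
onto the leftmost leaf. -/
inductive IsBST : PTree → Prop
  | single : IsBST leaf
  | graft (t : PTree) (m : ℕ) : IsBST t → 2 ≤ m → IsBST (graftLeftmost t (corolla m))

/-- Schröder trees whose leftmost child of the root is a leaf. -/
def IsPST (t : PTree) : Prop := ∃ cs, t = node (leaf :: cs)

end PTree
section Partitions

open scoped BigOperators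

/-- Set partitions of `[n] = {1,…,n}`, modeled as finpartitions of `Fin n`. -/
abbrev NPart (n : ℕ) := Finpartition (Finset.univ : Finset (Fin n))

/-- Noncrossing partitions: there are no `a < b < c < d` with `a, c` in one block and
`b, d` in a different block. -/
def IsNoncrossing {n : ℕ} (π : NPart n) : Prop :=
  ∀ a b c d : Fin n, a < b → b < c → c < d →
    ∀ V ∈ π.parts, ∀ W ∈ π.parts, a ∈ V → c ∈ V → b ∈ W → d ∈ W → V = W

/-- Interval partitions: every block is an interval of consecutive elements. -/
def IsIntervalPart {n : ℕ} (π : NPart n) : Prop :=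
  ∀ V ∈ π.parts, ∀ x ∈ V, ∀ y ∈ V, ∀ z : Fin n, x ≤ z → z ≤ y → z ∈ V

/-- Irreducible noncrossing partitions: `1` and `n` lie in the same block. -/
def IsIrreducibleNC {n : ℕ} (π : NPart n) : Prop :=
  ∃ V ∈ π.parts, (∀ i : Fin n, i.val = 0 → i ∈ V) ∧ (∀ i : Fin n, i.val = n - 1 → i ∈ V)

/-- `W` is nested in `V`: every element of `W` lies in the interval `[min V, max V]`. -/
def NestedIn {n : ℕ} (W V : Finset (Fin n)) : Prop :=
  ∀ w ∈ W, (∃ a ∈ V, a ≤ w) ∧ (∃ b ∈ V, w ≤ b)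

open Classical in
/-- The forest factorial `t(π)!` of the forest of nestings of `π`: the product, over all
blocks `V`, of the number of blocks nested in `V` (the size of the subtree rooted at `V`). -/
noncomputable def forestFactorial {n : ℕ} (π : NPart n) : ℕ :=
  ∏ V ∈ π.parts, (π.parts.filter fun W => NestedIn W V).card

/-- `f_π(a_1,…,a_n)`: the product over the blocks `V = {i_1 < … < i_s}` of `π` of
`f(a_{i_1},…,a_{i_s})`, for a family of multilinear functionals encoded as `f : List A → ℂ`. -/
noncomputable def blockApply {A : Type*} {n : ℕ} (f : List A → ℂ) (a : Fin n → A)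
    (π : NPart n) : ℂ :=
  ∏ V ∈ π.parts, f ((V.sort (· ≤ ·)).map a)

/-- `φ_π(a_1,…,a_n)` for the moment functionals `φ_m(a_1,…,a_m) = φ(a_1 ⋯ a_m)`. -/
noncomputable def momApply {A : Type*} [Ring A] {n : ℕ} (φ : A → ℂ) (a : Fin n → A)
    (π : NPart n) : ℂ :=
  blockApply (fun l => φ l.prod) a π

/-- `ω_k(t(π))` for the nesting poset of the blocks of `π` (for irreducible `π`, this is
the vertex poset of the tree of nestings, rooted at the outermost block): the number of
surjective strictly order-preserving maps onto `{1,…,k}`. -/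
noncomputable def omegaNestK {n : ℕ} (π : NPart n) (k : ℕ) : ℕ :=
  Nat.card {f : {V // V ∈ π.parts} → Fin k // Function.Surjective f ∧
    ∀ V W : {V // V ∈ π.parts}, NestedIn W.1 V.1 → V ≠ W → f V < f W}

/-- The Murua coefficient `ω(t(π))` of the tree (forest) of nestings of `π`. -/
noncomputable def omegaNest {n : ℕ} (π : NPart n) : ℂ :=
  ∑ k ∈ Finset.Icc 1 π.parts.card, ((-1 : ℂ) ^ (k + 1) / (k : ℂ)) * (omegaNestK π k : ℂ)

/-- The noncrossing partition `π(t)` associated to a Schröder tree `t ∈ ST(n)` equals `π`: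
two sectors lie in the same block of `π(t)` (i.e. have the same owning internal vertex)
iff they lie in the same block of `π`. -/
def TreePartEq {n : ℕ} (t : PTree) (π : NPart n) : Prop :=
  ∀ i j : Fin n, PTree.SameOwner t i.val j.val ↔ ∃ V ∈ π.parts, i ∈ V ∧ j ∈ V

/-- The moment–cumulant relation defining the monotone cumulants `h`. -/
def MonotoneMC {A : Type*} [Ring A] (φ : A → ℂ) (h : List A → ℂ) : Prop :=
  ∀ (m : ℕ), 1 ≤ m → ∀ a : Fin m → A,
    φ (List.ofFn a).prod =
      ∑ᶠ π ∈ {π : NPart m | IsNoncrossing π}, (forestFactorial π : ℂ)⁻¹ * blockApply h a π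

/-- The moment–cumulant relation defining the free cumulants `r`. -/
def FreeMC {A : Type*} [Ring A] (φ : A → ℂ) (r : List A → ℂ) : Prop :=
  ∀ (m : ℕ), 1 ≤ m → ∀ a : Fin m → A,
    φ (List.ofFn a).prod = ∑ᶠ π ∈ {π : NPart m | IsNoncrossing π}, blockApply r a π

/-- The moment–cumulant relation defining the Boolean cumulants `b`. -/
def BooleanMC {A : Type*} [Ring A] (φ : A → ℂ) (b : List A → ℂ) : Prop :=
  ∀ (m : ℕ), 1 ≤ m → ∀ a : Fin m → A,
    φ (List.ofFn a).prod = ∑ᶠ π ∈ {π : NPart m | IsIntervalPart π}, blockApply b a π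

end Partitions

/-!
Let functionals on words be convolved by `(F ∗ G)(w) = ∑ F(s₁ ⋯ s_k) G(g₀) ⋯ G(g_k)`, the sum being
over all ways of writing `w = g₀ s₁ g₁ ⋯ s_k g_k` with letters `s_i` and gap words `g_i`. This
product is associative and linear in `F`, and its unit is the indicator of the empty word.

Consider the polynomials `M_w = ∑_π X ^ |π| / t(π)! • h_π(w)`, where `π` runs over noncrossing
partitions. Since `|π|` is the sum, over the outermost blocks `V` of `π`, of the number of blocks
nested in `V`, removing an outermost block gives the differential equation `M' = h ∗ M`. Hence
`M_w(s + t) = (M(s) ∗ M(t))_w`, while `M(1)` is the moment functional `φ` and `h` is the coefficient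
of `X` in `M`.

In particular `M(N)` is the `N`-fold convolution power of `φ`. Reading `(F ∗ G)(w)` as a tree whose
root carries the letters fed to `F` and whose children are built on the gaps, one finds that
`M_w(N)` is the sum over Schröder trees `t` of `φ_{π(t)}(w)` times the number of strictly
order-preserving labellings of `sk(t)` by `N` labels. That number is `∑ k, ω_k(sk(t)) * N.choose k`,
a polynomial in `N` whose coefficient of `X` is `ω(sk(t))`.
-/

section GapConvolution

variable {A R S : Type*} [CommSemiring R] [CommSemiring S]

/-- The sum over all ways to write `w = g₀ s₁ g₁ s₂ ⋯ s_k g_k` with letters `s_i` and gap words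
`g_i` of `F (s₁ ⋯ s_k) * G₀ g₀ * G g₁ * ⋯ * G g_k`. The separate functional `G₀` for the initial
gap makes the recursion on `w` structural. -/
def gapSum (G : List A → R) : (List A → R) → (List A → R) → List A → R
  | F, G₀, [] => F [] * G₀ []
  | F, G₀, a :: w =>
      gapSum G F (fun u => G₀ (a :: u)) w + G₀ [] * gapSum G (fun u => F (a :: u)) G w

/-- The convolution of functionals on words: letters are fed to `F`, gaps to `G`. -/
def gapConv (F G : List A → R) : List A → R := gapSum G F G

/-- The unit of the convolution: the indicator of the empty word. -/
def emptyWord : List A → R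
  | [] => 1
  | _ :: _ => 0

theorem gapSum_add_letters (G : List A → R) (w : List A) (F F' G₀ : List A → R) :
    gapSum G (fun u => F u + F' u) G₀ w = gapSum G F G₀ w + gapSum G F' G₀ w := by
  induction w generalizing F F' G₀ with
  | nil => simp [gapSum, add_mul]
  | cons a w ih => simp only [gapSum, ih]; ring

theorem gapSum_mul_letters (G : List A → R) (w : List A) (c : R) (F G₀ : List A → R) :
    gapSum G (fun u => c * F u) G₀ w = c * gapSum G F G₀ w := by
  induction w generalizing F G₀ with
  | nil => simp [gapSum, mul_assoc]
  | cons a w ih => simp only [gapSum, ih]; ring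

theorem gapSum_add_gap (G : List A → R) (w : List A) (F G₀ G₀' : List A → R) :
    gapSum G F (fun u => G₀ u + G₀' u) w = gapSum G F G₀ w + gapSum G F G₀' w := by
  induction w generalizing F G₀ G₀' with
  | nil => simp [gapSum, mul_add]
  | cons a w ih => simp only [gapSum, ih]; ring

theorem gapSum_mul_gap (G : List A → R) (w : List A) (c : R) (F G₀ : List A → R) :
    gapSum G F (fun u => c * G₀ u) w = c * gapSum G F G₀ w := by
  induction w generalizing F G₀ with
  | nil => simp [gapSum, mul_left_comm]
  | cons a w ih => simp only [gapSum, ih]; ring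

theorem gapSum_zero_letters (G : List A → R) (w : List A) (G₀ : List A → R) :
    gapSum G (fun _ => 0) G₀ w = 0 := by
  simpa using gapSum_mul_letters G w 0 (fun _ => 0) G₀

theorem gapSum_zero_gap (G : List A → R) (w : List A) (F : List A → R) :
    gapSum G F (fun _ => 0) w = 0 := by
  simpa using gapSum_mul_gap G w 0 F fun _ => 0

theorem gapSum_assoc (G H : List A → R) (w : List A) (F G₀ H₀ : List A → R) :
    gapSum G (gapSum H F H₀) G₀ w = gapSum (gapSum G H G) F (gapSum G H₀ G₀) w := by
  induction w generalizing F G₀ H₀ with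
  | nil => simp [gapSum, mul_assoc]
  | cons a w ih =>
    simp only [gapSum, gapSum_add_letters, gapSum_mul_letters, gapSum_add_gap, gapSum_mul_gap, ih]
    ring

theorem gapConv_assoc (F H G : List A → R) (w : List A) :
    gapConv (gapConv F H) G w = gapConv F (gapConv H G) w :=
  gapSum_assoc G H w F G H

theorem gapSum_congr (w : List A) {G G' : List A → R} (F : List A → R) {G₀ G₀' : List A → R}
    (h₀ : ∀ v : List A, v.length ≤ w.length → G₀ v = G₀' v)
    (h : ∀ v : List A, v.length < w.length → G v = G' v) :
    gapSum G F G₀ w = gapSum G' F G₀' w := by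
  induction w generalizing F G₀ G₀' with
  | nil => simp [gapSum, h₀]
  | cons a w ih =>
    simp only [List.length_cons, Nat.lt_succ_iff] at h₀ h
    simp only [gapSum, h₀ [] (Nat.zero_le _)]
    rw [ih F (fun v hv => h₀ (a :: v) (by simpa using hv)) fun v hv => h v hv.le,
      ih _ h fun v hv => h v hv.le]

theorem gapSum_congr_of_apply_nil (w : List A) {G G' : List A → R} {F : List A → R}
    {G₀ G₀' : List A → R} (hF : F [] = 0)
    (h₀ : ∀ v : List A, v.length < w.length → G₀ v = G₀' v)
    (h : ∀ v : List A, v.length < w.length → G v = G' v) :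
    gapSum G F G₀ w = gapSum G' F G₀' w := by
  induction w generalizing G₀ G₀' with
  | nil => simp [gapSum, hF]
  | cons a w ih =>
    simp only [List.length_cons, Nat.lt_succ_iff] at h₀ h
    simp only [gapSum, h₀ [] (Nat.zero_le _)]
    rw [ih (fun v hv => h₀ (a :: v) (by simpa using hv)) fun v hv => h v hv.le,
      gapSum_congr w _ h fun v hv => h v hv.le]

theorem gapConv_congr_of_apply_nil (w : List A) {G G' F : List A → R} (hF : F [] = 0)
    (h : ∀ v : List A, v.length < w.length → G v = G' v) :
    gapConv F G w = gapConv F G' w :=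
  gapSum_congr_of_apply_nil w hF h h

theorem map_gapSum (f : R →+* S) (G : List A → R) (w : List A) (F G₀ : List A → R) :
    f (gapSum G F G₀ w) = gapSum (fun u => f (G u)) (fun u => f (F u)) (fun u => f (G₀ u)) w := by
  induction w generalizing F G₀ with
  | nil => simp [gapSum]
  | cons a w ih => simp [gapSum, ih]

theorem map_gapConv (f : R →+* S) (F G : List A → R) (w : List A) :
    f (gapConv F G w) = gapConv (fun u => f (F u)) (fun u => f (G u)) w :=
  map_gapSum f G w F G

theorem gapConv_emptyWord (F : List A → R) (w : List A) : gapConv F emptyWord w = F w := by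
  rw [gapConv]
  induction w generalizing F with
  | nil => simp [gapSum, emptyWord]
  | cons a w ih => simp [gapSum, emptyWord, ih, gapSum_zero_gap]

theorem gapSum_emptyWord_letters (G : List A → R) (w : List A) (G₀ : List A → R) :
    gapSum G emptyWord G₀ w = G₀ w := by
  induction w generalizing G₀ with
  | nil => simp [gapSum, emptyWord]
  | cons a w ih => simp [gapSum, emptyWord, ih, gapSum_zero_letters]

theorem emptyWord_gapConv (G : List A → R) (w : List A) : gapConv emptyWord G w = G w :=
  gapSum_emptyWord_letters G w G

theorem gapSum_eq_add_sum_range (G : List A → R) (w : List A) (F G₀ : List A → R) :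
    gapSum G F G₀ w = F [] * G₀ w + ∑ j ∈ Finset.range w.length,
      G₀ (w.take j) * gapConv (fun u => F ((w.drop j).take 1 ++ u)) G (w.drop (j + 1)) := by
  induction w generalizing F G₀ with
  | nil => simp [gapSum]
  | cons a w ih =>
    rw [gapSum, ih, List.length_cons, Finset.sum_range_succ']
    simp [gapConv, add_assoc]

end GapConvolution

section Semigroup

open Polynomial

variable {A : Type*}

theorem derivative_gapSum {R : Type*} [CommSemiring R] (G : List A → R) (w : List A)
    (F : List A → R[X]) (G₀ : List A → R) :
    derivative (gapSum (fun u => C (G u)) F (fun u => C (G₀ u)) w) =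
      gapSum (fun u => C (G u)) (fun u => derivative (F u)) (fun u => C (G₀ u)) w := by
  induction w generalizing F G₀ with
  | nil => simp [gapSum, mul_comm]
  | cons a w ih =>
    simp only [gapSum, derivative_add, derivative_mul, ih, derivative_C, zero_mul, zero_add]

/-- The family of polynomials `M` is the one-parameter convolution semigroup generated by `H`:
it starts at the unit of the convolution and solves `M' = H ∗ M`. -/
structure IsGeneratedBy {R : Type*} [CommSemiring R] (H : List A → R) (M : List A → R[X]) :
    Prop where
  nil : M [] = 1
  eval_zero_cons : ∀ a w, (M (a :: w)).eval 0 = 0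
  derivative_eq : ∀ w, derivative (M w) = gapConv (fun u => C (H u)) M w

section

variable {R : Type*} [CommSemiring R] {H : List A → R} {M : List A → R[X]}

theorem IsGeneratedBy.eval_zero (hM : IsGeneratedBy H M) (w : List A) :
    (M w).eval 0 = emptyWord w := by
  cases w with
  | nil => simp [hM.nil, emptyWord]
  | cons a w => simp [hM.eval_zero_cons, emptyWord]

theorem IsGeneratedBy.generator_nil (hM : IsGeneratedBy H M) : H [] = 0 := by
  simpa [hM.nil, gapConv, gapSum, eq_comm (a := (0 : R[X]))] using hM.derivative_eq []

theorem IsGeneratedBy.coeff_one (hM : IsGeneratedBy H M) (w : List A) :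
    (M w).coeff 1 = H w := by
  calc
    (M w).coeff 1 = (derivative (M w)).eval 0 := by
      rw [← coeff_zero_eq_eval_zero, coeff_derivative]; simp
    _ = gapConv H emptyWord w := by
      rw [hM.derivative_eq, ← coe_evalRingHom, map_gapConv]
      simp only [coe_evalRingHom, eval_C, hM.eval_zero]
    _ = H w := gapConv_emptyWord H w

end

variable {R : Type*} [CommRing R] [IsAddTorsionFree R]

theorem eq_of_derivative_eq {p q : R[X]} (h : derivative p = derivative q)
    (h₀ : p.eval 0 = q.eval 0) : p = q := by
  have hconst : p - q = C ((p - q).coeff 0) := eq_C_of_derivative_eq_zero (by simp [h])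
  rwa [coeff_zero_eq_eval_zero, eval_sub, h₀, sub_self, C_0, sub_eq_zero] at hconst

variable {H : List A → R} {M : List A → R[X]}

theorem IsGeneratedBy.comp_X_add_C (hM : IsGeneratedBy H M) (t : R) (w : List A) :
    (M w).comp (X + C t) = gapConv M (fun u => C ((M u).eval t)) w := by
  induction hw : w.length using Nat.strong_induction_on generalizing w with
  | _ n ih =>
    subst hw
    apply eq_of_derivative_eq
    · calc
        derivative ((M w).comp (X + C t))
            = gapConv (fun u => C (H u)) (fun u => (M u).comp (X + C t)) w := by
          rw [derivative_comp, hM.derivative_eq, ← coe_compRingHom_apply, map_gapConv]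
          simp [coe_compRingHom_apply]
        _ = gapConv (fun u => C (H u)) (gapConv M fun u => C ((M u).eval t)) w :=
          gapConv_congr_of_apply_nil w (by simp [hM.generator_nil]) fun v hv => ih _ hv v rfl
        _ = derivative (gapConv M (fun u => C ((M u).eval t)) w) := by
          rw [← gapConv_assoc, gapConv.eq_1 M, derivative_gapSum]
          simp only [hM.derivative_eq]
          rfl
    · rw [← coe_evalRingHom, map_gapConv]
      simp only [coe_evalRingHom, eval_comp, eval_add, eval_X, eval_C, zero_add, hM.eval_zero]
      exact (emptyWord_gapConv (fun u => (M u).eval t) w).symm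

theorem IsGeneratedBy.eval_add (hM : IsGeneratedBy H M) (s t : R) (w : List A) :
    (M w).eval (s + t) = gapConv (fun u => (M u).eval s) (fun u => (M u).eval t) w := by
  have h := congrArg (evalRingHom s) (hM.comp_X_add_C t w)
  rw [map_gapConv] at h
  simpa [eval_comp] using h

end Semigroup

section NoncrossingRecursion

open Polynomial

variable {A K : Type*} [Field K] {m n : ℕ}

/-- The blocks `σ` form a noncrossing partition of the set `E`. -/
structure IsNCPart (E : Finset (Fin n)) (σ : Finset (Finset (Fin n))) : Prop where
  nonempty : ∀ W ∈ σ, W.Nonempty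
  disjoint : ∀ V ∈ σ, ∀ W ∈ σ, ∀ x ∈ V, x ∈ W → V = W
  mem_iff : ∀ x, x ∈ E ↔ ∃ W ∈ σ, x ∈ W
  noncrossing : ∀ a b c d : Fin n, a < b → b < c → c < d →
    ∀ V ∈ σ, ∀ W ∈ σ, a ∈ V → c ∈ V → b ∈ W → d ∈ W → V = W

/-- No element of `V` lies between two elements of a block of `σ`. In particular, a block `V` of `σ`
is outermost if and only if `Uncut V (σ.erase V)`. -/
def Uncut (V : Finset (Fin n)) (σ : Finset (Finset (Fin n))) : Prop :=
  ∀ v ∈ V, ∀ W ∈ σ, (∀ x ∈ W, x < v) ∨ ∀ x ∈ W, v < x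

/-- The subword of `a` supported on `W`. -/
def subword (a : Fin n → A) (W : Finset (Fin n)) : List A := (W.sort (· ≤ ·)).map a

open Classical in
/-- The polynomial weight `X ^ |σ| / t(σ)! * h_σ(a)`. -/
noncomputable def ncWeight (h : List A → K) (a : Fin n → A) (σ : Finset (Finset (Fin n))) : K[X] :=
  ∏ W ∈ σ, C (h (subword a W) * ((σ.filter fun U => NestedIn U W).card : K)⁻¹) * X

open Classical in
/-- The generating polynomial of the noncrossing partitions of `E` whose blocks do not surround any
element of `V`. -/
noncomputable def ncSum (h : List A → K) (a : Fin n → A) (E V : Finset (Fin n)) : K[X] :=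
  ∑ σ with IsNCPart E σ ∧ Uncut V σ, ncWeight h a σ

/-- The polynomial `∑_π X ^ |π| / t(π)! * h_π(w)` over the noncrossing partitions `π` of the
positions of the word `w`; at `X = 1` it is the right-hand side of the moment–cumulant relation. -/
noncomputable def ncPoly (h : List A → K) (w : List A) : K[X] := ncSum h w.get Finset.univ ∅

variable {D E V : Finset (Fin n)} {σ τ : Finset (Finset (Fin n))}

theorem uncut_empty (σ : Finset (Finset (Fin n))) : Uncut ∅ σ := by simp [Uncut]

theorem nestedIn_refl (V : Finset (Fin n)) : NestedIn V V :=
  fun w hw => ⟨⟨w, hw, le_rfl⟩, w, hw, le_rfl⟩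

theorem nestedIn_trans {U V W : Finset (Fin n)} (hUV : NestedIn U V) (hVW : NestedIn V W) :
    NestedIn U W := by
  intro u hu
  obtain ⟨⟨x, hx, hxu⟩, y, hy, huy⟩ := hUV u hu
  obtain ⟨⟨p, hp, hpx⟩, -⟩ := hVW x hx
  obtain ⟨-, q, hq, hyq⟩ := hVW y hy
  exact ⟨⟨p, hp, hpx.trans hxu⟩, q, hq, huy.trans hyq⟩

theorem not_nestedIn_of_lt {U W : Finset (Fin n)} (hU : U.Nonempty)
    (hUW : ∀ x ∈ U, ∀ y ∈ W, x < y) : ¬ NestedIn U W := by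
  intro hn
  obtain ⟨x, hx⟩ := hU
  obtain ⟨⟨y, hy, hyx⟩, -⟩ := hn x hx
  exact (hUW x hx y hy).not_ge hyx

theorem not_nestedIn_of_gt {U W : Finset (Fin n)} (hU : U.Nonempty)
    (hUW : ∀ x ∈ U, ∀ y ∈ W, y < x) : ¬ NestedIn U W := by
  intro hn
  obtain ⟨x, hx⟩ := hU
  obtain ⟨-, y, hy, hxy⟩ := hn x hx
  exact (hUW x hx y hy).not_ge hxy

theorem Uncut.not_nestedIn (h : Uncut V σ) (hV : V.Nonempty) {W : Finset (Fin n)} (hW : W ∈ σ) :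
    ¬ NestedIn V W := by
  intro hn
  obtain ⟨v, hv⟩ := hV
  obtain ⟨⟨x, hx, hxv⟩, y, hy, hvy⟩ := hn v hv
  rcases h v hv W hW with hlt | hgt
  · exact (hlt y hy).not_ge hvy
  · exact (hgt x hx).not_ge hxv

namespace IsNCPart

theorem subset (hσ : IsNCPart E σ) {W : Finset (Fin n)} (hW : W ∈ σ) : W ⊆ E :=
  fun x hx => (hσ.mem_iff x).2 ⟨W, hW, hx⟩

theorem singleton (hV : V.Nonempty) : IsNCPart V {V} := by
  constructor <;> simp [hV]

theorem of_subset (hσ : IsNCPart E σ) (hτσ : τ ⊆ σ) (hD : ∀ x, x ∈ D ↔ ∃ W ∈ τ, x ∈ W) :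
    IsNCPart D τ where
  nonempty W hW := hσ.nonempty W (hτσ hW)
  disjoint U hU W hW := hσ.disjoint U (hτσ hU) W (hτσ hW)
  mem_iff := hD
  noncrossing a b c d hab hbc hcd U hU W hW :=
    hσ.noncrossing a b c d hab hbc hcd U (hτσ hU) W (hτσ hW)

theorem union (hσ : IsNCPart D σ) (hτ : IsNCPart E τ)
    (hDτ : Uncut D τ) : IsNCPart (D ∪ E) (σ ∪ τ) := by
  have uncut : ∀ {U W x y z}, U ∈ σ → W ∈ τ → y ∈ U → x ∈ W → z ∈ W → x ≤ y → y ≤ z → False := by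
    intro U W x y z hU hW hy hx hz hxy hyz
    rcases hDτ y (hσ.subset hU hy) W hW with hlt | hgt
    · exact (hlt z hz).not_ge hyz
    · exact (hgt x hx).not_ge hxy
  refine ⟨fun W hW => (Finset.mem_union.1 hW).elim (hσ.nonempty W) (hτ.nonempty W), ?_, ?_, ?_⟩
  · intro U hU W hW x hxU hxW
    rcases Finset.mem_union.1 hU with hU | hU <;> rcases Finset.mem_union.1 hW with hW | hW
    · exact hσ.disjoint U hU W hW x hxU hxW
    · exact (uncut hU hW hxU hxW hxW le_rfl le_rfl).elim
    · exact (uncut hW hU hxW hxU hxU le_rfl le_rfl).elim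
    · exact hτ.disjoint U hU W hW x hxU hxW
  · intro x
    simp only [Finset.mem_union, hσ.mem_iff, hτ.mem_iff, or_and_right, exists_or]
  · intro a b c d hab hbc hcd U hU W hW haU hcU hbW hdW
    rcases Finset.mem_union.1 hU with hU | hU <;> rcases Finset.mem_union.1 hW with hW | hW
    · exact hσ.noncrossing a b c d hab hbc hcd U hU W hW haU hcU hbW hdW
    · exact (uncut hU hW hcU hbW hdW hbc.le hcd.le).elim
    · exact (uncut hW hU hbW haU hcU hab.le hbc.le).elim
    · exact hτ.noncrossing a b c d hab hbc hcd U hU W hW haU hcU hbW hdW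

theorem eq_empty (hσ : IsNCPart ∅ σ) : σ = ∅ := by
  refine Finset.eq_empty_of_forall_notMem fun W hW => ?_
  obtain ⟨x, hx⟩ := hσ.nonempty W hW
  exact Finset.notMem_empty x (hσ.subset hW hx)

theorem empty : IsNCPart (∅ : Finset (Fin n)) ∅ := by
  constructor <;> simp

theorem nestedIn_of_lt_of_lt (hσ : IsNCPart E σ) {U V : Finset (Fin n)} (hU : U ∈ σ) (hV : V ∈ σ)
    (hUV : U ≠ V) {x v y : Fin n} (hx : x ∈ U) (hv : v ∈ V) (hy : y ∈ U) (hxv : x < v)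
    (hvy : v < y) : NestedIn V U ∧ ¬ NestedIn U V := by
  have hlt : ∀ b ∈ V, x < b := by
    intro b hb
    refine lt_of_le_of_ne (not_lt.1 fun hbx => ?_) ?_
    · exact hUV (hσ.noncrossing b x v y hbx hxv hvy V hV U hU hb hv hx hy).symm
    · rintro rfl
      exact hUV (hσ.disjoint U hU V hV x hx hb)
  have hgt : ∀ b ∈ V, b ≤ y := fun b hb => not_lt.1 fun hyb =>
    hUV (hσ.noncrossing x v y b hxv hvy hyb U hU V hV hx hy hv hb)
  refine ⟨fun b hb => ⟨⟨x, hx, (hlt b hb).le⟩, y, hy, hgt b hb⟩, fun hn => ?_⟩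
  obtain ⟨⟨b, hb, hbx⟩, -⟩ := hn x hx
  exact (hlt b hb).not_ge hbx

theorem exists_outer (hσ : IsNCPart E σ) {W : Finset (Fin n)} (hW : W ∈ σ) :
    ∃ V ∈ σ, Uncut V (σ.erase V) ∧ NestedIn W V := by
  classical
  obtain ⟨V, hVmem, hVmax⟩ := Finset.exists_max_image (σ.filter fun V => NestedIn W V)
    (fun V => (σ.filter fun U => NestedIn U V).card) ⟨W, by simp [hW, nestedIn_refl]⟩
  obtain ⟨hV, hWV⟩ := Finset.mem_filter.1 hVmem
  refine ⟨V, hV, fun v hv U hU => ?_, hWV⟩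
  obtain ⟨hUV, hU⟩ := Finset.mem_erase.1 hU
  by_contra! hcut
  obtain ⟨⟨y, hy, hvy⟩, x, hx, hxv⟩ := hcut
  have hne : ∀ z ∈ U, v ≠ z := by
    rintro z hz rfl
    exact hUV (hσ.disjoint U hU V hV v hz hv)
  obtain ⟨hVU, hUV⟩ := hσ.nestedIn_of_lt_of_lt hU hV hUV hx hv hy (hxv.lt_of_ne (hne x hx).symm)
    (hvy.lt_of_ne (hne y hy))
  refine (Finset.card_lt_card ?_).not_ge
    (hVmax U (Finset.mem_filter.2 ⟨hU, nestedIn_trans hWV hVU⟩))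
  refine Finset.ssubset_iff_of_subset (Finset.monotone_filter_right σ
    fun Y _ hY => nestedIn_trans hY hVU) |>.2 ⟨U, ?_, ?_⟩ <;> simp [hU, hUV, nestedIn_refl]

end IsNCPart

theorem eq_of_uncut_of_nestedIn {U V W : Finset (Fin n)} (hU : U ∈ σ) (hV : V ∈ σ)
    (hUcut : Uncut U (σ.erase U)) (hVcut : Uncut V (σ.erase V)) (hW : W.Nonempty)
    (hWU : NestedIn W U) (hWV : NestedIn W V) : U = V := by
  by_contra hUV
  obtain ⟨w, hw⟩ := hW
  obtain ⟨⟨p, hp, hpw⟩, q, hq, hwq⟩ := hWV w hw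
  obtain ⟨⟨r, hr, hrw⟩, s, hs, hws⟩ := hWU w hw
  rcases hVcut p hp U (Finset.mem_erase.2 ⟨hUV, hU⟩) with hlt | hgt
  · exact (hlt s hs).not_ge (hpw.trans hws)
  · rcases hUcut r hr V (Finset.mem_erase.2 ⟨Ne.symm hUV, hV⟩) with hlt | hgt'
    · exact (hlt q hq).not_ge (hrw.trans hwq)
    · exact (hgt r hr).not_gt (hgt' p hp)

open Classical in
theorem IsNCPart.card_eq_sum_outer (hσ : IsNCPart E σ) :
    σ.card = ∑ V ∈ σ with Uncut V (σ.erase V), (σ.filter fun W => NestedIn W V).card := by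
  simp only [Finset.card_eq_sum_ones σ, Finset.card_filter]
  rw [Finset.sum_comm]
  refine Finset.sum_congr rfl fun W hW => ?_
  obtain ⟨V, hV, hVcut, hWV⟩ := hσ.exists_outer hW
  rw [Finset.sum_eq_single_of_mem V (Finset.mem_filter.2 ⟨hV, hVcut⟩), if_pos hWV]
  intro U hU hUV
  obtain ⟨hU, hUcut⟩ := Finset.mem_filter.1 hU
  exact if_neg fun hWU =>
    hUV (eq_of_uncut_of_nestedIn hU hV hUcut hVcut (hσ.nonempty W hW) hWU hWV)

open Classical in
theorem ncWeight_union (h : List A → K) (a : Fin n → A) (hστ : Disjoint σ τ)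
    (hnest : ∀ U ∈ σ, ∀ W ∈ τ, ¬ NestedIn U W ∧ ¬ NestedIn W U) :
    ncWeight h a (σ ∪ τ) = ncWeight h a σ * ncWeight h a τ := by
  rw [ncWeight, Finset.prod_union hστ, ncWeight, ncWeight]
  congr 1
  · refine Finset.prod_congr rfl fun W hW => ?_
    rw [Finset.filter_union, Finset.filter_false_of_mem (s := τ) fun U hU => (hnest W hW U hU).2,
      Finset.union_empty]
  · refine Finset.prod_congr rfl fun W hW => ?_
    rw [Finset.filter_union, Finset.filter_false_of_mem (s := σ) fun U hU => (hnest U hU W hW).1,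
      Finset.empty_union]

open Classical in
theorem IsNCPart.ncWeight_union_of_lt (h : List A → K) (a : Fin n → A) (hσ : IsNCPart D σ)
    (hτ : IsNCPart E τ) (hDE : ∀ x ∈ D, ∀ y ∈ E, x < y) :
    ncWeight h a (σ ∪ τ) = ncWeight h a σ * ncWeight h a τ := by
  have hlt : ∀ U ∈ σ, ∀ W ∈ τ, ∀ x ∈ U, ∀ y ∈ W, x < y := fun U hU W hW x hx y hy =>
    hDE x (hσ.subset hU hx) y (hτ.subset hW hy)
  refine ncWeight_union h a (Finset.disjoint_left.2 fun W hWσ hWτ => ?_) fun U hU W hW => ⟨?_, ?_⟩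
  · obtain ⟨x, hx⟩ := hσ.nonempty W hWσ
    exact (hlt W hWσ W hWτ x hx x hx).false
  · exact not_nestedIn_of_lt (hσ.nonempty U hU) (hlt U hU W hW)
  · exact not_nestedIn_of_gt (hτ.nonempty W hW) fun y hy x hx => hlt U hU W hW x hx y hy

open Classical in
theorem ncWeight_eq_C_mul_X_pow (h : List A → K) (a : Fin n → A) (σ : Finset (Finset (Fin n))) :
    ncWeight h a σ =
      C (∏ W ∈ σ, h (subword a W) * ((σ.filter fun U => NestedIn U W).card : K)⁻¹) *
        X ^ σ.card := by
  rw [ncWeight, Finset.prod_mul_distrib, Finset.prod_const, map_prod]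

theorem X_mul_derivative_ncWeight (h : List A → K) (a : Fin n → A) (σ : Finset (Finset (Fin n))) :
    X * derivative (ncWeight h a σ) = C (σ.card : K) * ncWeight h a σ := by
  rw [ncWeight_eq_C_mul_X_pow, derivative_C_mul_X_pow]
  rcases σ.card.eq_zero_or_pos with h0 | hpos
  · simp [h0]
  · rw [mul_left_comm, mul_pow_sub_one hpos.ne', C_mul]
    ring

open Classical in
theorem ncWeight_eq_mul_erase (h : List A → K) (a : Fin n → A) (hV : V ∈ σ) (hVne : V.Nonempty)
    (hVcut : Uncut V (σ.erase V)) :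
    ncWeight h a σ = C (h (subword a V) * ((σ.filter fun W => NestedIn W V).card : K)⁻¹) * X *
      ncWeight h a (σ.erase V) := by
  rw [ncWeight, ← Finset.mul_prod_erase σ _ hV, ncWeight]
  congr 1
  refine Finset.prod_congr rfl fun W hW => ?_
  rw [Finset.filter_erase, Finset.erase_eq_of_notMem]
  exact fun hn => hVcut.not_nestedIn hVne hW (Finset.mem_filter.1 hn).2

open Classical in
theorem IsNCPart.derivative_ncWeight [CharZero K] (h : List A → K) (a : Fin n → A)
    (hσ : IsNCPart E σ) :
    derivative (ncWeight h a σ) =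
      ∑ V ∈ σ with Uncut V (σ.erase V), C (h (subword a V)) * ncWeight h a (σ.erase V) := by
  refine mul_left_cancel₀ X_ne_zero ?_
  rw [X_mul_derivative_ncWeight, hσ.card_eq_sum_outer, Nat.cast_sum, map_sum, Finset.sum_mul,
    Finset.mul_sum]
  refine Finset.sum_congr rfl fun V hV => ?_
  obtain ⟨hV, hVcut⟩ := Finset.mem_filter.1 hV
  have hcard : ((σ.filter fun W => NestedIn W V).card : K) ≠ 0 := by
    rw [Nat.cast_ne_zero, Finset.card_ne_zero]
    exact ⟨V, Finset.mem_filter.2 ⟨hV, nestedIn_refl V⟩⟩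
  rw [ncWeight_eq_mul_erase h a hV (hσ.nonempty V hV) hVcut, ← mul_assoc, ← mul_assoc, ← C_mul,
    mul_left_comm, mul_inv_cancel₀ hcard, mul_one]
  ring

theorem IsNCPart.erase_block (hσ : IsNCPart E σ) (hV : V ∈ σ) :
    IsNCPart (E \ V) (σ.erase V) := by
  refine hσ.of_subset (Finset.erase_subset V σ) fun x => ?_
  simp only [Finset.mem_sdiff, hσ.mem_iff, Finset.mem_erase]
  constructor
  · rintro ⟨⟨W, hW, hxW⟩, hxV⟩
    exact ⟨W, ⟨fun hWV => hxV (hWV ▸ hxW), hW⟩, hxW⟩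
  · rintro ⟨W, ⟨hWV, hW⟩, hxW⟩
    exact ⟨⟨W, hW, hxW⟩, fun hxV => hWV (hσ.disjoint W hW V hV x hxW hxV)⟩

theorem IsNCPart.insert_block (hσ : IsNCPart (E \ V) σ) (hVE : V ⊆ E)
    (hV : V.Nonempty) (hVcut : Uncut V σ) : IsNCPart E (insert V σ) := by
  have hunion := (IsNCPart.singleton hV).union hσ hVcut
  rwa [Finset.union_sdiff_of_subset hVE, ← Finset.insert_eq] at hunion

theorem IsNCPart.notMem_of_sdiff (hσ : IsNCPart (E \ V) σ) (hV : V.Nonempty) : V ∉ σ := by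
  intro hVσ
  obtain ⟨x, hx⟩ := hV
  exact (Finset.mem_sdiff.1 (hσ.subset hVσ hx)).2 hx

open Classical in
theorem derivative_ncSum [CharZero K] (h : List A → K) (a : Fin n → A) (E : Finset (Fin n)) :
    derivative (ncSum h a E ∅) =
      ∑ V ∈ E.powerset with V.Nonempty, C (h (subword a V)) * ncSum h a (E \ V) V := by
  simp only [ncSum, Finset.mul_sum, derivative_sum]
  rw [Finset.sum_congr rfl fun σ hσ => (Finset.mem_filter.1 hσ).2.1.derivative_ncWeight h a,
    Finset.sum_sigma', Finset.sum_sigma']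
  refine Finset.sum_bij' (fun p _ => ⟨p.2, p.1.erase p.2⟩) (fun p _ => ⟨insert p.1 p.2, p.1⟩)
    ?_ ?_ ?_ ?_ fun _ _ => rfl
  all_goals
    rintro ⟨p, q⟩ hp
    simp only [Finset.mem_sigma, Finset.mem_filter, Finset.mem_univ, true_and,
      Finset.mem_powerset] at hp ⊢
  · obtain ⟨⟨hσ, -⟩, hV, hVcut⟩ := hp
    exact ⟨⟨hσ.subset hV, hσ.nonempty q hV⟩, hσ.erase_block hV, hVcut⟩
  · obtain ⟨⟨hVE, hV⟩, hσ, hVcut⟩ := hp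
    refine ⟨⟨hσ.insert_block hVE hV hVcut, uncut_empty _⟩, Finset.mem_insert_self p q, ?_⟩
    rwa [Finset.erase_insert (hσ.notMem_of_sdiff hV)]
  · simp [Finset.insert_erase hp.2.1]
  · simp [Finset.erase_insert (hp.2.1.notMem_of_sdiff hp.1.2)]

theorem ncSum_empty (h : List A → K) (a : Fin n → A) : ncSum h a ∅ ∅ = 1 := by
  classical
  rw [ncSum, Finset.sum_eq_single_of_mem ∅ (by simp [IsNCPart.empty, uncut_empty])]
  · simp [ncWeight]
  · exact fun σ hσ hne => absurd (Finset.mem_filter.1 hσ).2.1.eq_empty hne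

open Classical in
theorem eval_zero_ncSum (h : List A → K) (a : Fin n → A) (hE : E.Nonempty) :
    (ncSum h a E V).eval 0 = 0 := by
  rw [ncSum, eval_finsetSum]
  refine Finset.sum_eq_zero fun σ hσ => ?_
  obtain ⟨x, hx⟩ := hE
  obtain ⟨W, hW, -⟩ := ((Finset.mem_filter.1 hσ).2.1.mem_iff x).1 hx
  rw [ncWeight, eval_prod]
  exact Finset.prod_eq_zero hW (by simp)

theorem IsNCPart.filter_subset (hσ : IsNCPart (D ∪ E) σ) (hDE : Disjoint D E)
    (hcut : ∀ W ∈ σ, W ⊆ D ∨ W ⊆ E) : IsNCPart D (σ.filter (· ⊆ D)) := by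
  refine hσ.of_subset (Finset.filter_subset _ σ) fun x => ⟨fun hx => ?_, ?_⟩
  · obtain ⟨W, hW, hxW⟩ := (hσ.mem_iff x).1 (Finset.mem_union_left E hx)
    refine ⟨W, Finset.mem_filter.2 ⟨hW, (hcut W hW).resolve_right fun hWE => ?_⟩, hxW⟩
    exact Finset.disjoint_left.1 hDE hx (hWE hxW)
  · rintro ⟨W, hW, hxW⟩
    exact (Finset.mem_filter.1 hW).2 hxW

theorem IsNCPart.filter_subset_union (hσ : IsNCPart D σ) (hτ : IsNCPart E τ)
    (hDE : Disjoint D E) : (σ ∪ τ).filter (· ⊆ D) = σ := by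
  rw [Finset.filter_union, Finset.filter_true_of_mem fun W hW => hσ.subset hW,
    Finset.filter_false_of_mem, Finset.union_empty]
  intro W hW hWD
  obtain ⟨x, hx⟩ := hτ.nonempty W hW
  exact Finset.disjoint_left.1 hDE (hWD hx) (hτ.subset hW hx)

theorem IsNCPart.uncut_insert_iff {e : Fin n} (hσ : IsNCPart (D ∪ E) σ) (hD : ∀ x ∈ D, x < e)
    (hE : ∀ x ∈ E, e < x) (hV : ∀ x ∈ V, e < x) :
    Uncut (insert e V) σ ↔ (∀ W ∈ σ, W ⊆ D ∨ W ⊆ E) ∧ Uncut V (σ.filter (· ⊆ E)) := by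
  have hDE : ∀ W ∈ σ, ∀ x ∈ W, x ∈ D ∨ x ∈ E := fun W hW x hx =>
    Finset.mem_union.1 (hσ.subset hW hx)
  constructor
  · refine fun hcut => ⟨fun W hW => ?_, fun v hv W hW => ?_⟩
    · refine (hcut e (Finset.mem_insert_self e V) W hW).imp (fun hlt x hx => ?_) fun hgt x hx => ?_
      · exact (hDE W hW x hx).resolve_right fun hxE => (hlt x hx).not_gt (hE x hxE)
      · exact (hDE W hW x hx).resolve_left fun hxD => (hgt x hx).not_gt (hD x hxD)
    · exact hcut v (Finset.mem_insert_of_mem hv) W (Finset.mem_filter.1 hW).1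
  · rintro ⟨hcut, hVcut⟩ v hv W hW
    rcases Finset.mem_insert.1 hv with rfl | hv
    · exact (hcut W hW).imp (fun hWD x hx => hD x (hWD hx)) fun hWE x hx => hE x (hWE hx)
    · rcases hcut W hW with hWD | hWE
      · exact Or.inl fun x hx => (hD x (hWD hx)).trans (hV v hv)
      · exact hVcut v hv W (Finset.mem_filter.2 ⟨hW, hWE⟩)

theorem ncSum_union_insert (h : List A → K) (a : Fin n → A) {e : Fin n} (hD : ∀ x ∈ D, x < e)
    (hE : ∀ x ∈ E, e < x) (hV : ∀ x ∈ V, e < x) :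
    ncSum h a (D ∪ E) (insert e V) = ncSum h a D ∅ * ncSum h a E V := by
  classical
  have hlt : ∀ x ∈ D, ∀ y ∈ E, x < y := fun x hx y hy => (hD x hx).trans (hE y hy)
  have hdisj : Disjoint D E := Finset.disjoint_left.2 fun x hxD hxE => (hlt x hxD x hxE).false
  simp only [ncSum, Finset.sum_mul_sum]
  rw [← Finset.sum_product']
  symm
  refine Finset.sum_bij' (fun p _ => p.1 ∪ p.2)
    (fun σ _ => (σ.filter (· ⊆ D), σ.filter (· ⊆ E))) ?_ ?_ ?_ ?_ ?_
  all_goals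
    intro p hp
    simp only [Finset.mem_product, Finset.mem_filter, Finset.mem_univ, true_and, uncut_empty,
      and_true] at hp ⊢
  · obtain ⟨hσ, hτ, hτV⟩ := hp
    have hστ := hσ.union hτ fun x hx W hW => Or.inr fun y hy => hlt x hx y (hτ.subset hW hy)
    refine ⟨hστ, (hστ.uncut_insert_iff hD hE hV).2 ⟨fun W hW => ?_, ?_⟩⟩
    · exact (Finset.mem_union.1 hW).imp hσ.subset hτ.subset
    · rwa [Finset.union_comm, hτ.filter_subset_union hσ hdisj.symm]
  · obtain ⟨hσ, hcut⟩ := hp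
    obtain ⟨hcut, hVcut⟩ := (hσ.uncut_insert_iff hD hE hV).1 hcut
    refine ⟨hσ.filter_subset hdisj hcut, ?_, hVcut⟩
    rw [Finset.union_comm] at hσ
    exact hσ.filter_subset hdisj.symm fun W hW => (hcut W hW).symm
  · obtain ⟨hσ, hτ, -⟩ := hp
    rw [hσ.filter_subset_union hτ hdisj, Finset.union_comm, hτ.filter_subset_union hσ hdisj.symm]
  · rw [← Finset.filter_or]
    exact Finset.filter_true_of_mem ((hp.1.uncut_insert_iff hD hE hV).1 hp.2).1
  · exact (hp.1.ncWeight_union_of_lt h a hp.2.1 hlt).symm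

theorem subword_empty (a : Fin n → A) : subword a ∅ = [] := by simp [subword]

theorem subword_insert_min (a : Fin n → A) {e : Fin n} {E : Finset (Fin n)}
    (h : ∀ x ∈ E, e < x) : subword a (insert e E) = a e :: subword a E := by
  rw [subword, Finset.sort_insert _ (fun x hx => (h x hx).le) fun he => (h e he).false]
  rfl

theorem subword_union (a : Fin n → A) {D E : Finset (Fin n)} (h : ∀ x ∈ D, ∀ y ∈ E, x < y) :
    subword a (D ∪ E) = subword a D ++ subword a E := by
  induction D using Finset.induction_on_min with
  | empty => simp [subword_empty]
  | insert d D hd ih =>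
    simp only [Finset.forall_mem_insert] at h
    rw [Finset.insert_union, subword_insert_min a hd, subword_insert_min, ih h.2, List.cons_append]
    exact fun x hx => (Finset.mem_union.1 hx).elim (hd x) (h.1 x)

theorem subword_univ (a : Fin n → A) : subword a Finset.univ = List.ofFn a := by
  rw [subword, Fin.sort_univ, List.ofFn_eq_map]

theorem subword_map (a : Fin n → A) (f : Fin m ↪o Fin n) (E : Finset (Fin m)) :
    subword a (E.map f.toEmbedding) = subword (a ∘ f) E := by
  rw [subword, subword, ← Finset.map_sort f.toEmbedding E (· ≤ ·) (· ≤ ·) (by simp), List.map_map]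
  rfl

theorem nestedIn_map (f : Fin m ↪o Fin n) (U V : Finset (Fin m)) :
    NestedIn (U.map f.toEmbedding) (V.map f.toEmbedding) ↔ NestedIn U V := by
  simp [NestedIn]

theorem isNCPart_map (f : Fin m ↪o Fin n) {E : Finset (Fin m)} {σ : Finset (Finset (Fin m))} :
    IsNCPart (E.map f.toEmbedding) (σ.map (Finset.mapEmbedding f.toEmbedding).toEmbedding) ↔
      IsNCPart E σ := by
  constructor
  · intro hσ
    refine ⟨?_, ?_, fun x => ?_, ?_⟩
    · simpa using hσ.nonempty
    · intro V hV W hW x hxV hxW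
      simpa using hσ.disjoint _ (Finset.mem_map_of_mem _ hV) _ (Finset.mem_map_of_mem _ hW) (f x)
        (by simpa using hxV) (by simpa using hxW)
    · simpa using hσ.mem_iff (f x)
    · intro a b c d hab hbc hcd V hV W hW haV hcV hbW hdW
      simpa using hσ.noncrossing (f a) (f b) (f c) (f d) (by simpa) (by simpa) (by simpa)
        _ (Finset.mem_map_of_mem _ hV) _ (Finset.mem_map_of_mem _ hW)
        (by simpa using haV) (by simpa using hcV) (by simpa using hbW) (by simpa using hdW)
  · intro hσ
    refine ⟨?_, ?_, fun x => ?_, ?_⟩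
    · simpa using hσ.nonempty
    · simp only [Finset.forall_mem_map]
      intro V hV W hW x hxV hxW
      obtain ⟨x, hx, rfl⟩ := Finset.mem_map.1 hxV
      rw [hσ.disjoint V hV W hW x hx (by simpa using hxW)]
    · simp only [Finset.mem_map, exists_exists_and_eq_and]
      constructor
      · rintro ⟨x, hx, rfl⟩
        obtain ⟨W, hW, hxW⟩ := (hσ.mem_iff x).1 hx
        exact ⟨W, hW, Finset.mem_map_of_mem _ hxW⟩
      · rintro ⟨W, hW, hxW⟩
        obtain ⟨x, hx, rfl⟩ := Finset.mem_map.1 hxW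
        exact ⟨x, hσ.subset hW hx, rfl⟩
    · simp only [Finset.forall_mem_map]
      intro a b c d hab hbc hcd V hV W hW haV hcV hbW hdW
      obtain ⟨a, ha, rfl⟩ := Finset.mem_map.1 haV
      obtain ⟨b, hb, rfl⟩ := Finset.mem_map.1 hbW
      obtain ⟨c, hc, rfl⟩ := Finset.mem_map.1 hcV
      obtain ⟨d, hd, rfl⟩ := Finset.mem_map.1 hdW
      rw [hσ.noncrossing a b c d (by simpa using hab) (by simpa using hbc) (by simpa using hcd)
        V hV W hW ha hc hb hd]

open Classical in
theorem ncWeight_map (h : List A → K) (a : Fin n → A) (f : Fin m ↪o Fin n)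
    (σ : Finset (Finset (Fin m))) :
    ncWeight h a (σ.map (Finset.mapEmbedding f.toEmbedding).toEmbedding) =
      ncWeight h (a ∘ f) σ := by
  simp [ncWeight, Finset.prod_map, Finset.filter_map, subword_map, Function.comp_def, nestedIn_map]

theorem ncSum_map (h : List A → K) (a : Fin n → A) (f : Fin m ↪o Fin n) (E : Finset (Fin m)) :
    ncSum h a (E.map f.toEmbedding) ∅ = ncSum h (a ∘ f) E ∅ := by
  classical
  simp only [ncSum, uncut_empty, and_true]
  symm
  refine Finset.sum_bij (fun σ _ => σ.map (Finset.mapEmbedding f.toEmbedding).toEmbedding) ?_ ?_ ?_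
    fun σ _ => (ncWeight_map h a f σ).symm
  · simp [isNCPart_map]
  · exact fun _ _ _ _ heq => Finset.map_injective _ heq
  · intro τ hτ
    have hτ : IsNCPart (E.map f.toEmbedding) τ := by simpa using hτ
    obtain ⟨σ, -, rfl⟩ : ∃ σ ⊆ Finset.univ,
        τ = σ.map (Finset.mapEmbedding f.toEmbedding).toEmbedding := by
      refine Finset.subset_map_iff.1 fun W hW => ?_
      obtain ⟨W, -, rfl⟩ := Finset.subset_map_iff.1 (hτ.subset hW)
      exact Finset.mem_map_of_mem _ (Finset.mem_univ W)
    exact ⟨σ, by simpa [isNCPart_map] using hτ, rfl⟩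

theorem ncPoly_ofFn (h : List A → K) (a : Fin n → A) :
    ncPoly h (List.ofFn a) = ncSum h a Finset.univ ∅ := by
  have hget : (List.ofFn a).get = a ∘ (Fin.castOrderIso List.length_ofFn).toOrderEmbedding := by
    ext i
    simp only [List.get_ofFn]
    rfl
  have huniv : Finset.univ.map
      (Fin.castOrderIso (List.length_ofFn (f := a))).toOrderEmbedding.toEmbedding = Finset.univ :=
    Finset.map_univ_equiv (Fin.castOrderIso List.length_ofFn).toEquiv
  rw [ncPoly, hget, ← ncSum_map, huniv]

theorem ncSum_eq_ncPoly (h : List A → K) (a : Fin n → A) (E : Finset (Fin n)) :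
    ncSum h a E ∅ = ncPoly h (subword a E) := by
  have hE : Finset.univ.map (E.orderEmbOfFin rfl).toEmbedding = E := by simp
  rw [← hE, ncSum_map, subword_map, subword_univ, ncPoly_ofFn]

theorem sum_powerset_ncSum (h : List A → K) (a : Fin n → A) (E : Finset (Fin n)) :
    ∀ (D : Finset (Fin n)) (F : List A → K[X]), (∀ x ∈ D, ∀ y ∈ E, x < y) →
      ∑ V ∈ E.powerset, F (subword a V) * ncSum h a (D ∪ E \ V) V =
        gapSum (ncPoly h) F (fun u => ncPoly h (subword a D ++ u)) (subword a E) := by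
  induction E using Finset.induction_on_min with
  | empty =>
    intro D F _
    simp [subword_empty, gapSum, ncSum_eq_ncPoly]
  | insert e E he ih =>
    intro D F hD
    simp only [Finset.forall_mem_insert] at hD
    have hDe : ∀ x ∈ D, x < e := fun x hx => (hD x hx).1
    have heE : e ∉ E := fun heE => (he e heE).false
    rw [Finset.sum_powerset_insert heE, subword_insert_min a he, gapSum]
    congr 1
    · have hpush : ∀ u, subword a D ++ a e :: u = subword a (D ∪ {e}) ++ u := fun u => by
        rw [subword_union a (by simpa using hDe)]
        simp [subword]
      simp only [hpush]
      rw [← ih (D ∪ {e}) F fun x hx y hy => ?_]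
      · refine Finset.sum_congr rfl fun V hV => ?_
        rw [Finset.insert_sdiff_of_notMem _ fun heV => heE (Finset.mem_powerset.1 hV heV),
          Finset.union_assoc, Finset.insert_eq]
      · rcases Finset.mem_union.1 hx with hx | hx
        · exact (hD x hx).2 y hy
        · exact Finset.mem_singleton.1 hx ▸ he y hy
    · have hrest := ih ∅ (fun u => F (a e :: u)) (by simp)
      simp only [subword_empty, List.nil_append, List.append_nil, Finset.empty_union] at hrest ⊢
      rw [← hrest, Finset.mul_sum, ← ncSum_eq_ncPoly]
      refine Finset.sum_congr rfl fun V hV => ?_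
      have hV : ∀ x ∈ V, e < x := fun x hx => he x (Finset.mem_powerset.1 hV hx)
      rw [subword_insert_min a hV, Finset.insert_sdiff_insert,
        Finset.sdiff_insert_of_notMem heE, ncSum_union_insert h a hDe (by grind) hV]
      ring

theorem gapConv_ncPoly (h : List A → K) (F : List A → K[X]) (a : Fin n → A) :
    gapConv F (ncPoly h) (List.ofFn a) =
      ∑ V, F (subword a V) * ncSum h a (Finset.univ \ V) V := by
  have hsum := sum_powerset_ncSum h a Finset.univ ∅ F (by simp)
  simpa [gapConv, subword_empty, subword_univ] using hsum.symm

open Classical in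
theorem isGeneratedBy_ncPoly [CharZero K] (h : List A → K) :
    IsGeneratedBy (Function.update h [] 0) (ncPoly h) where
  nil := ncSum_empty h _
  eval_zero_cons a w := eval_zero_ncSum h _ Finset.univ_nonempty
  derivative_eq w := by
    rw [ncPoly, derivative_ncSum, Finset.powerset_univ, Finset.sum_filter]
    conv_rhs => rw [← List.ofFn_get w]
    rw [gapConv_ncPoly]
    refine Finset.sum_congr rfl fun V _ => ?_
    rcases V.eq_empty_or_nonempty with rfl | hV
    · simp [subword_empty]
    · have hne : subword w.get V ≠ [] := by
        simpa [subword, ← List.length_eq_zero_iff] using hV.ne_empty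
      rw [if_pos hV, Function.update_of_ne hne]

open Classical in
theorem eval_one_ncPoly (h : List A → ℂ) (a : Fin n → A) :
    (ncPoly h (List.ofFn a)).eval 1 =
      ∑ᶠ π ∈ {π : NPart n | IsNoncrossing π}, (forestFactorial π : ℂ)⁻¹ * blockApply h a π := by
  rw [ncPoly_ofFn, finsum_mem_eq_finite_toFinset_sum _ (Set.toFinite _), ncSum, eval_finsetSum]
  symm
  refine Finset.sum_bij (fun π _ => π.parts) ?_ ?_ ?_ ?_
  · intro π hπ
    have hπ : IsNoncrossing π := by simpa using hπ
    refine Finset.mem_filter.2 ⟨Finset.mem_univ _, ⟨?_, ?_, ?_, hπ⟩, uncut_empty _⟩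
    · exact fun W hW => π.nonempty_of_mem_parts hW
    · exact fun V hV W hW x hxV hxW => π.eq_of_mem_parts hV hW hxV hxW
    · exact fun x => ⟨fun hx => π.exists_mem hx, fun _ => Finset.mem_univ x⟩
  · exact fun π _ π' _ heq => Finpartition.ext heq
  · intro σ hσ
    obtain ⟨hσ, -⟩ := (Finset.mem_filter.1 hσ).2
    refine ⟨⟨σ, ?_, ?_, ?_⟩, ?_, rfl⟩
    · rw [Finset.supIndep_iff_pairwiseDisjoint]
      intro V hV W hW hVW
      exact Finset.disjoint_left.2 fun x hxV hxW => hVW (hσ.disjoint V hV W hW x hxV hxW)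
    · ext x
      simpa [Finset.mem_sup] using hσ.mem_iff x
    · exact fun hbot => Finset.not_nonempty_empty (hσ.nonempty _ hbot)
    · simpa [IsNoncrossing] using hσ.noncrossing
  · intro π _
    rw [ncWeight, eval_prod, forestFactorial, blockApply, Nat.cast_prod, ← Finset.prod_inv_distrib,
      ← Finset.prod_mul_distrib]
    exact Finset.prod_congr rfl fun V _ => by simp [subword, mul_comm]

end NoncrossingRecursion

section StrictMaps

open Polynomial

/-- The number of maps `I → Fin N` that are strictly increasing along `r`: the strict order
polynomial of `r` at `N`. -/
noncomputable def strictCount {I : Type*} (r : I → I → Prop) (N : ℕ) : ℕ :=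
  Nat.card {f : I → Fin N // ∀ v w, r v w → f v < f w}

/-- The number of surjections `I → Fin k` that are strictly increasing along `r`: the number
`ω_k` when `r` is the order of a poset `I`. -/
noncomputable def strictSurjCount {I : Type*} (r : I → I → Prop) (k : ℕ) : ℕ :=
  Nat.card {f : I → Fin k // Function.Surjective f ∧ ∀ v w, r v w → f v < f w}

theorem strictCount_congr {I J : Type*} {r : I → I → Prop} {s : J → J → Prop} (e : I ≃ J)
    (h : ∀ v w, r v w ↔ s (e v) (e w)) (N : ℕ) : strictCount r N = strictCount s N := by
  refine Nat.card_congr (Equiv.subtypeEquiv (Equiv.arrowCongr e (Equiv.refl _)) fun f => ?_)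
  simp only [Equiv.arrowCongr_apply, Equiv.coe_refl, Function.comp_apply, id]
  refine ⟨fun hf v w hvw => hf _ _ ?_, fun hf v w hvw => ?_⟩
  · rw [h]; simpa using hvw
  · simpa using hf (e v) (e w) ((h v w).1 hvw)

theorem strictCount_of_isEmpty {I : Type*} [IsEmpty I] (r : I → I → Prop) (N : ℕ) :
    strictCount r N = 1 := by
  rw [strictCount, Nat.card_eq_one_iff_unique]
  exact ⟨⟨fun f g => Subtype.ext (Subsingleton.elim _ _)⟩,
    ⟨⟨fun i => isEmptyElim i, fun i => isEmptyElim i⟩⟩⟩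

theorem strictCount_zero {I : Type*} [Nonempty I] (r : I → I → Prop) : strictCount r 0 = 0 := by
  have : IsEmpty {f : I → Fin 0 // ∀ v w, r v w → f v < f w} :=
    ⟨fun f => (f.1 (Classical.arbitrary I)).elim0⟩
  exact Nat.card_of_isEmpty

theorem strictCount_sum {I J : Type*} (r : I ⊕ J → I ⊕ J → Prop)
    (hlr : ∀ x y, ¬ r (.inl x) (.inr y)) (hrl : ∀ x y, ¬ r (.inr x) (.inl y)) (N : ℕ) :
    strictCount r N = strictCount (fun x y => r (.inl x) (.inl y)) N *
      strictCount (fun x y => r (.inr x) (.inr y)) N := by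
  rw [strictCount, strictCount, strictCount, ← Nat.card_prod]
  refine Nat.card_congr ⟨fun f => (⟨fun x => f.1 (.inl x), fun v w hvw => f.2 _ _ hvw⟩,
    ⟨fun x => f.1 (.inr x), fun v w hvw => f.2 _ _ hvw⟩),
    fun p => ⟨Sum.elim p.1.1 p.2.1, ?_⟩, ?_, ?_⟩
  · rintro (v | v) (w | w) hvw
    · exact p.1.2 v w hvw
    · exact absurd hvw (hlr v w)
    · exact absurd hvw (hrl v w)
    · exact p.2.2 v w hvw
  · rintro ⟨f, hf⟩
    refine Subtype.ext (funext ?_)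
    rintro (v | v) <;> rfl
  · rintro ⟨f, g⟩
    rfl

/-- Distinguish the maps according to whether `0` is attained; if it is, then at `none` only. -/
theorem strictCount_option_succ {J : Type*} [Finite J] (r : Option J → Option J → Prop)
    (hbot : ∀ x, r none (some x)) (hmin : ∀ x, ¬ r x none) (N : ℕ) :
    strictCount r (N + 1) = strictCount r N + strictCount (fun x y => r (some x) (some y)) N := by
  rw [strictCount, strictCount, strictCount, ← Nat.card_sum]
  symm
  refine Nat.card_congr (Equiv.ofBijective (Sum.elim
    (fun f => ⟨fun x => (f.1 x).succ, fun v w hvw => Fin.succ_lt_succ_iff.2 (f.2 v w hvw)⟩)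
    fun g => ⟨fun x => x.elim 0 fun y => (g.1 y).succ, ?_⟩) ⟨?_, ?_⟩)
  · rintro (_ | v) (_ | w) hvw
    · exact absurd hvw (hmin _)
    · exact Fin.succ_pos _
    · exact absurd hvw (hmin _)
    · exact Fin.succ_lt_succ_iff.2 (g.2 v w hvw)
  · rintro (f | f) (g | g) hfg <;> have hfg := congrArg Subtype.val hfg <;>
      simp only [Sum.elim_inl, Sum.elim_inr] at hfg
    · exact congrArg _ (Subtype.ext (funext fun x => Fin.succ_injective _ (congrFun hfg x)))
    · exact absurd (congrFun hfg none) (Fin.succ_ne_zero _)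
    · exact absurd (congrFun hfg none).symm (Fin.succ_ne_zero _)
    · exact congrArg _ (Subtype.ext (funext fun x => Fin.succ_injective _
        (congrFun hfg (some x))))
  · rintro ⟨f, hf⟩
    have hsome : ∀ x, f (some x) ≠ 0 := fun x => (Fin.zero_le _).trans_lt (hf _ _ (hbot x)) |>.ne'
    by_cases h0 : f none = 0
    · refine ⟨.inr ⟨fun x => (f (some x)).pred (hsome x), fun v w hvw => ?_⟩,
        Subtype.ext (funext ?_)⟩
      · simpa using hf _ _ hvw
      · rintro (_ | x) <;> simp [h0]
    · have hne : ∀ x, f x ≠ 0 := by rintro (_ | x); exacts [h0, hsome x]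
      refine ⟨.inl ⟨fun x => (f x).pred (hne x), fun v w hvw => ?_⟩, Subtype.ext (funext ?_)⟩
      · simpa using hf _ _ hvw
      · intro x; simp

theorem strictSurjCount_eq_zero {I : Type*} [Finite I] (r : I → I → Prop) {k : ℕ}
    (hk : Nat.card I < k) : strictSurjCount r k = 0 := by
  have : IsEmpty {f : I → Fin k // Function.Surjective f ∧ ∀ v w, r v w → f v < f w} := by
    refine ⟨fun f => ?_⟩
    have := Nat.card_le_card_of_surjective f.1 f.2.1
    rw [Nat.card_fin] at this
    omega
  exact Nat.card_of_isEmpty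

theorem range_orderEmbOfFin_comp {I α : Type*} [LinearOrder α] (s : Finset α) {f : I → Fin s.card}
    (hf : Function.Surjective f) : Set.range (fun x => s.orderEmbOfFin rfl (f x)) = s := by
  rw [← Finset.range_orderEmbOfFin s rfl]
  exact hf.range_comp _

theorem strictCount_eq_sum_finset {I : Type*} [Finite I] (r : I → I → Prop) (N : ℕ) :
    strictCount r N = ∑ s : Finset (Fin N), strictSurjCount r s.card := by
  classical
  cases nonempty_fintype I
  simp only [strictCount, strictSurjCount]
  rw [← Nat.card_sigma]
  symm
  refine Nat.card_congr (Equiv.ofBijective (fun p => ⟨fun x => p.1.orderEmbOfFin rfl (p.2.1 x),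
    fun v w hvw => (OrderEmbedding.lt_iff_lt _).2 (p.2.2.2 v w hvw)⟩) ⟨?_, ?_⟩)
  · rintro ⟨s, f, hf, _⟩ ⟨t, g, hg, _⟩ heq
    have hfg := congrArg Subtype.val heq
    have hst : s = t := by
      rw [← Finset.coe_inj, ← range_orderEmbOfFin_comp s hf, ← range_orderEmbOfFin_comp t hg]
      exact congrArg Set.range hfg
    subst hst
    congr 2
    exact funext fun x => (s.orderEmbOfFin rfl).injective (congrFun hfg x)
  · rintro ⟨f, hf⟩
    let toImage := (Finset.univ.image f).orderIsoOfFin rfl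
    refine ⟨⟨Finset.univ.image f, fun x =>
      toImage.symm ⟨f x, Finset.mem_image_of_mem f (Finset.mem_univ x)⟩, fun y => ?_,
      fun v w hvw => toImage.symm.lt_iff_lt.2 (hf v w hvw)⟩, Subtype.ext (funext fun x => ?_)⟩
    · obtain ⟨x, -, hx⟩ := Finset.mem_image.1 (toImage y).2
      exact ⟨x, toImage.symm_apply_eq.2 (Subtype.ext hx)⟩
    · simp [toImage, ← Finset.coe_orderIsoOfFin_apply]

theorem strictCount_eq_sum_choose {I : Type*} [Finite I] (r : I → I → Prop) (N : ℕ) :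
    strictCount r N =
      ∑ k ∈ Finset.range (Nat.card I + 1), N.choose k * strictSurjCount r k := by
  have hsum := Finset.sum_powerset_apply_card (fun k => strictSurjCount r k)
    (x := (Finset.univ : Finset (Fin N)))
  rw [Finset.powerset_univ, Finset.card_fin] at hsum
  rw [strictCount_eq_sum_finset, hsum]
  simp only [smul_eq_mul]
  rw [Finset.sum_subset (Finset.range_subset_range.2 (le_max_left (N + 1) (Nat.card I + 1))),
    Finset.sum_subset (Finset.range_subset_range.2 (le_max_right (N + 1) (Nat.card I + 1)))]
  · intro k _ hk
    rw [strictSurjCount_eq_zero r (by simpa using hk), mul_zero]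
  · intro k _ hk
    rw [Nat.choose_eq_zero_of_lt (by simpa using hk), zero_mul]

variable (K : Type*) [Field K]

/-- The polynomial `X (X - 1) ⋯ (X - k + 1) / k!`, which takes the value `N.choose k` at `N`. -/
noncomputable def binomPoly (k : ℕ) : K[X] := C ((k.factorial : K)⁻¹) * descPochhammer K k

theorem coeff_one_binomPoly_zero : (binomPoly K 0).coeff 1 = 0 := by
  simp [binomPoly, coeff_one]

variable [CharZero K]

theorem eval_natCast_binomPoly (k N : ℕ) : (binomPoly K k).eval (N : K) = N.choose k := by
  rw [binomPoly, eval_mul, eval_C, descPochhammer_eval_eq_descFactorial,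
    Nat.descFactorial_eq_factorial_mul_choose, Nat.cast_mul, inv_mul_cancel_left₀]
  exact_mod_cast k.factorial_ne_zero

theorem eval_neg_one_descPochhammer (R : Type*) [CommRing R] (k : ℕ) :
    (descPochhammer R k).eval (-1) = (-1) ^ k * k.factorial := by
  induction k with
  | zero => simp
  | succ k ih =>
    rw [descPochhammer_succ_eval, ih, Nat.factorial_succ]
    push_cast
    ring

theorem coeff_one_binomPoly_succ (k : ℕ) :
    (binomPoly K (k + 1)).coeff 1 = (-1) ^ k / ((k : K) + 1) := by
  have hfact : (k.factorial : K) ≠ 0 := by exact_mod_cast k.factorial_ne_zero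
  have hsucc : (k : K) + 1 ≠ 0 := by exact_mod_cast k.succ_ne_zero
  rw [binomPoly, coeff_C_mul, descPochhammer_succ_left, coeff_X_mul, coeff_zero_eq_eval_zero,
    eval_comp]
  simp only [eval_sub, eval_X, eval_one, zero_sub, eval_neg_one_descPochhammer]
  rw [Nat.factorial_succ]
  push_cast
  field_simp

/-- The polynomial whose value at `N` is the number of maps to `Fin N` that are strictly increasing
along `r`. Its linear coefficient is the Murua coefficient of `r`. -/
noncomputable def strictPoly {I : Type*} (r : I → I → Prop) : K[X] :=
  ∑ k ∈ Finset.range (Nat.card I + 1), C (strictSurjCount r k : K) * binomPoly K k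

theorem eval_natCast_strictPoly {I : Type*} [Finite I] (r : I → I → Prop) (N : ℕ) :
    (strictPoly K r).eval (N : K) = strictCount r N := by
  rw [strictPoly, strictCount_eq_sum_choose, eval_finsetSum, Nat.cast_sum]
  exact Finset.sum_congr rfl fun k _ => by
    rw [eval_mul, eval_C, eval_natCast_binomPoly, Nat.cast_mul, mul_comm]

theorem coeff_one_strictPoly {I : Type*} (r : I → I → Prop) :
    (strictPoly K r).coeff 1 =
      ∑ k ∈ Finset.Icc 1 (Nat.card I), (-1 : K) ^ (k + 1) / k * strictSurjCount r k := by
  rw [strictPoly, finsetSum_coeff, Finset.sum_range_succ', coeff_C_mul, coeff_one_binomPoly_zero,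
    mul_zero, add_zero, ← Finset.Ico_add_one_right_eq_Icc, Finset.sum_Ico_eq_sum_range,
    Nat.add_sub_cancel]
  refine Finset.sum_congr rfl fun k _ => ?_
  rw [coeff_C_mul, coeff_one_binomPoly_succ, add_comm 1 k]
  push_cast
  ring

end StrictMaps

section Paths

namespace PTree

theorem node_injective : Function.Injective node := fun _ _ => node.inj

/-- The path in `node (c :: cs)` of the vertex with path `q` in `node cs`; the root is fixed. The
nonempty paths in `node (c :: cs)` are thus the `0 :: p`, in `c`, and the nonempty `bump q`. -/
def bump : List ℕ → List ℕ
  | [] => []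
  | i :: p => (i + 1) :: p

theorem bump_injective : Function.Injective bump := by
  rintro (_ | ⟨i, p⟩) (_ | ⟨j, q⟩) h <;> simp_all [bump]

theorem bump_eq_nil {q : List ℕ} : bump q = [] ↔ q = [] := by
  cases q <;> simp [bump]

theorem bump_ne_zero_cons {p q : List ℕ} : bump q ≠ 0 :: p := by
  cases q <;> simp [bump]

theorem exists_eq_cons_or_bump {q : List ℕ} (hq : q ≠ []) :
    (∃ p, q = 0 :: p) ∨ ∃ p, p ≠ [] ∧ q = bump p := by
  rcases q with _ | ⟨_ | i, p⟩
  · exact absurd rfl hq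
  · exact Or.inl ⟨p, rfl⟩
  · exact Or.inr ⟨i :: p, by simp, rfl⟩

/-- The decomposition of a set of nonempty paths into those through the first child of the root and
those through the other children. -/
noncomputable def pathSplit (R : List ℕ → Prop) :
    {p // R (0 :: p)} ⊕ {q // q ≠ [] ∧ R (bump q)} ≃ {q // q ≠ [] ∧ R q} :=
  Equiv.ofBijective (Sum.elim (fun p => ⟨0 :: p.1, by simp, p.2⟩)
    fun q => ⟨bump q.1, by simpa [bump_eq_nil] using q.2.1, q.2.2⟩) <| by
    constructor
    · rintro (⟨p, hp⟩ | ⟨p, hp⟩) (⟨q, hq⟩ | ⟨q, hq⟩) h <;> have h := congrArg Subtype.val h <;>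
        simp only [Sum.elim_inl, Sum.elim_inr] at h
      · simpa using h
      · exact absurd h.symm bump_ne_zero_cons
      · exact absurd h bump_ne_zero_cons
      · have := bump_injective h
        subst this
        rfl
    · rintro ⟨q, hq, hR⟩
      rcases exists_eq_cons_or_bump hq with ⟨p, rfl⟩ | ⟨p, hp, rfl⟩
      · exact ⟨.inl ⟨p, hR⟩, rfl⟩
      · exact ⟨.inr ⟨p, hp, hR⟩, rfl⟩

theorem finprod_mem_path_split {M : Type*} [CommMonoid M] (R : List ℕ → Prop)
    (hR : {q | q ≠ [] ∧ R q}.Finite) (g : List ℕ → M) :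
    ∏ᶠ q ∈ {q | q ≠ [] ∧ R q}, g q =
      (∏ᶠ p ∈ {p | R (0 :: p)}, g (0 :: p)) *
        ∏ᶠ q ∈ {q | q ≠ [] ∧ R (bump q)}, g (bump q) := by
  have hset : {q | q ≠ [] ∧ R q} =
      (fun p => 0 :: p) '' {p | R (0 :: p)} ∪ bump '' {q | q ≠ [] ∧ R (bump q)} := by
    ext q
    simp only [Set.mem_union, Set.mem_image, Set.mem_ofPred_eq]
    constructor
    · rintro ⟨hq, hRq⟩
      rcases exists_eq_cons_or_bump hq with ⟨p, rfl⟩ | ⟨p, hp, rfl⟩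
      · exact Or.inl ⟨p, hRq, rfl⟩
      · exact Or.inr ⟨p, ⟨hp, hRq⟩, rfl⟩
    · rintro (⟨p, hp, rfl⟩ | ⟨p, ⟨hp, hRp⟩, rfl⟩)
      · exact ⟨by simp, hp⟩
      · exact ⟨by simpa [bump_eq_nil] using hp, hRp⟩
  have hfin := hR
  rw [hset, Set.finite_union] at hfin
  rw [hset, finprod_mem_union _ hfin.1 hfin.2, finprod_mem_image, finprod_mem_image]
  · exact bump_injective.injOn
  · intro p _ q _ h
    simpa using h
  · rw [Set.disjoint_left]
    rintro _ ⟨p, -, rfl⟩ ⟨q, -, h⟩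
    exact bump_ne_zero_cons h

theorem subtreeAt_cons_zero (c : PTree) (cs : List PTree) (p : List ℕ) :
    subtreeAt (0 :: p) (node (c :: cs)) = subtreeAt p c := by
  simp [subtreeAt]

theorem subtreeAt_cons_bump (c : PTree) (cs : List PTree) {q : List ℕ} (hq : q ≠ []) :
    subtreeAt (bump q) (node (c :: cs)) = subtreeAt q (node cs) := by
  cases q with
  | nil => exact absurd rfl hq
  | cons i p => simp [bump, subtreeAt]

theorem subtreeAt_nil_children {q : List ℕ} (hq : q ≠ []) : subtreeAt q (node []) = none := by
  cases q with
  | nil => exact absurd rfl hq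
  | cons i p => simp [subtreeAt]

theorem subtreeAt_nil (t : PTree) : subtreeAt [] t = some t := by
  cases t; rfl

/-- The vertices of `node (c :: cs)` other than the root are those of `c` and those of `node cs`
other than the root, so one can often induct on both at once. -/
theorem induction_cons {P : PTree → Prop} (nil : P (node []))
    (cons : ∀ c cs, P c → P (node cs) → P (node (c :: cs))) : ∀ t, P t
  | node [] => nil
  | node (c :: cs) => cons c cs (induction_cons nil cons c) (induction_cons nil cons (node cs))

theorem not_isVertex_node_nil {q : List ℕ} (hq : q ≠ []) : ¬ IsVertex (node []) q := by
  rw [IsVertex, subtreeAt_nil_children hq]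
  simp

theorem isVertex_cons_zero (c : PTree) (cs : List PTree) (p : List ℕ) :
    IsVertex (node (c :: cs)) (0 :: p) ↔ IsVertex c p := by
  rw [IsVertex, subtreeAt_cons_zero, IsVertex]

theorem isVertex_cons_bump (c : PTree) (cs : List PTree) {q : List ℕ} (hq : q ≠ []) :
    IsVertex (node (c :: cs)) (bump q) ↔ IsVertex (node cs) q := by
  rw [IsVertex, subtreeAt_cons_bump c cs hq, IsVertex]

theorem finite_isVertex (t : PTree) : {p | IsVertex t p}.Finite := by
  induction t using induction_cons with
  | nil =>
    refine (Set.finite_singleton []).subset fun q hq => ?_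
    by_contra hne
    exact not_isVertex_node_nil hne hq
  | cons c cs ihc ihcs =>
    refine (((ihc.image (0 :: ·)).union (ihcs.image bump)).insert []).subset fun q hq => ?_
    by_cases hne : q = []
    · exact Or.inl hne
    rcases exists_eq_cons_or_bump hne with ⟨p, rfl⟩ | ⟨p, hp, rfl⟩
    · exact Or.inr (Or.inl ⟨p, (isVertex_cons_zero c cs p).1 hq, rfl⟩)
    · exact Or.inr (Or.inr ⟨p, (isVertex_cons_bump c cs hp).1 hq, rfl⟩)

theorem IsLeafAt.isVertex {t : PTree} {p : List ℕ} (h : IsLeafAt t p) : IsVertex t p := by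
  simp [IsVertex, IsLeafAt.eq_1 t p ▸ h]

theorem IsInternalAt.isVertex {t : PTree} {p : List ℕ} (h : IsInternalAt t p) : IsVertex t p := by
  obtain ⟨cs, hcs, -⟩ := h
  simp [IsVertex, hcs]

theorem finite_isLeafAt (t : PTree) : {p | IsLeafAt t p}.Finite :=
  (finite_isVertex t).subset fun _ h => IsLeafAt.isVertex h

theorem finite_isInternalAt (t : PTree) : {p | IsInternalAt t p}.Finite :=
  (finite_isVertex t).subset fun _ h => IsInternalAt.isVertex h

theorem isLeafAt_cons_zero (c : PTree) (cs : List PTree) (p : List ℕ) :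
    IsLeafAt (node (c :: cs)) (0 :: p) ↔ IsLeafAt c p := by
  rw [IsLeafAt, subtreeAt_cons_zero, IsLeafAt]

theorem isLeafAt_cons_bump (c : PTree) (cs : List PTree) {q : List ℕ} (hq : q ≠ []) :
    IsLeafAt (node (c :: cs)) (bump q) ↔ IsLeafAt (node cs) q := by
  rw [IsLeafAt, subtreeAt_cons_bump c cs hq, IsLeafAt]

theorem isInternalAt_cons_zero (c : PTree) (cs : List PTree) (p : List ℕ) :
    IsInternalAt (node (c :: cs)) (0 :: p) ↔ IsInternalAt c p := by
  rw [IsInternalAt, subtreeAt_cons_zero, IsInternalAt]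

theorem isInternalAt_cons_bump (c : PTree) (cs : List PTree) {q : List ℕ} (hq : q ≠ []) :
    IsInternalAt (node (c :: cs)) (bump q) ↔ IsInternalAt (node cs) q := by
  rw [IsInternalAt, subtreeAt_cons_bump c cs hq, IsInternalAt]

theorem isInternalAt_nil {cs : List PTree} : IsInternalAt (node cs) [] ↔ cs ≠ [] := by
  simp [IsInternalAt, subtreeAt]

theorem not_isInternalAt_node_nil {q : List ℕ} : ¬ IsInternalAt (node []) q := by
  by_cases hq : q = []
  · simp [hq, isInternalAt_nil]
  · exact fun h => not_isVertex_node_nil hq h.isVertex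

theorem not_isLeafAt_node_nil_of_ne_nil {q : List ℕ} (hq : q ≠ []) : ¬ IsLeafAt (node []) q :=
  fun h => not_isVertex_node_nil hq h.isVertex

theorem isLeafAt_nil {cs : List PTree} : IsLeafAt (node cs) [] ↔ cs = [] := by
  simp [IsLeafAt, subtreeAt]

theorem IsLeafAt.ne_nil {cs : List PTree} (hcs : cs ≠ []) {q : List ℕ}
    (h : IsLeafAt (node cs) q) : q ≠ [] := by
  rintro rfl
  exact hcs (isLeafAt_nil.1 h)

theorem natCard_path_split (R : List ℕ → Prop) (hR : {q | q ≠ [] ∧ R q}.Finite) :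
    Nat.card {q // q ≠ [] ∧ R q} =
      Nat.card {p // R (0 :: p)} + Nat.card {q // q ≠ [] ∧ R (bump q)} := by
  have : Finite {q // q ≠ [] ∧ R q} := hR
  have : Finite ({p // R (0 :: p)} ⊕ {q // q ≠ [] ∧ R (bump q)}) :=
    Finite.of_equiv _ (pathSplit R).symm
  have : Finite {p // R (0 :: p)} := Finite.sum_left {q // q ≠ [] ∧ R (bump q)}
  have : Finite {q // q ≠ [] ∧ R (bump q)} := Finite.sum_right {p // R (0 :: p)}
  rw [← Nat.card_congr (pathSplit R), Nat.card_sum]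

theorem numLeaves_leaf : numLeaves leaf = 1 := by
  have hroot : ∀ p : {p // IsLeafAt leaf p}, p.1 = [] := fun p => by
    by_contra hne
    exact not_isLeafAt_node_nil_of_ne_nil hne p.2
  rw [numLeaves, Nat.card_eq_one_iff_unique]
  exact ⟨⟨fun p q => Subtype.ext ((hroot p).trans (hroot q).symm)⟩, ⟨⟨[], isLeafAt_nil.2 rfl⟩⟩⟩

theorem natCard_forest_leaves (cs : List PTree) :
    Nat.card {q // q ≠ [] ∧ IsLeafAt (node cs) q} = (cs.map numLeaves).sum := by
  induction cs with
  | nil =>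
    have : IsEmpty {q // q ≠ [] ∧ IsLeafAt (node []) q} :=
      ⟨fun q => not_isLeafAt_node_nil_of_ne_nil q.2.1 q.2.2⟩
    simp
  | cons c cs ih =>
    rw [natCard_path_split (IsLeafAt (node (c :: cs)))
      ((finite_isLeafAt _).subset fun q hq => hq.2)]
    simp only [isLeafAt_cons_zero, List.map_cons, List.sum_cons, ← ih]
    congr 1
    exact Nat.card_congr (Equiv.subtypeEquivRight fun q =>
      and_congr_right fun hq => isLeafAt_cons_bump c cs hq)

theorem numLeaves_node {cs : List PTree} (hcs : cs ≠ []) :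
    numLeaves (node cs) = (cs.map numLeaves).sum := by
  rw [← natCard_forest_leaves, numLeaves]
  exact Nat.card_congr (Equiv.subtypeEquivRight fun q => ⟨fun h => ⟨h.ne_nil hcs, h⟩, And.right⟩)

theorem numLeaves_node_cons (c : PTree) {cs : List PTree} (hcs : cs ≠ []) :
    numLeaves (node (c :: cs)) = numLeaves c + numLeaves (node cs) := by
  rw [numLeaves_node (by simp), numLeaves_node hcs, List.map_cons, List.sum_cons]

theorem numLeaves_node_singleton (c : PTree) : numLeaves (node [c]) = numLeaves c := by
  rw [numLeaves_node (by simp)]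
  simp

theorem numLeaves_le_numLeaves_node_cons (c : PTree) (cs : List PTree) :
    numLeaves c ≤ numLeaves (node (c :: cs)) := by
  rw [numLeaves_node (by simp), List.map_cons, List.sum_cons]
  exact Nat.le_add_right _ _

theorem numLeaves_pos (t : PTree) : 1 ≤ numLeaves t := by
  induction t using induction_cons with
  | nil => exact numLeaves_leaf.ge
  | cons c cs ihc _ => exact ihc.trans (numLeaves_le_numLeaves_node_cons c cs)

theorem lex_cons_zero (q p : List ℕ) :
    List.Lex (· < ·) (0 :: q) (0 :: p) ↔ List.Lex (· < ·) q p := by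
  simp [List.cons_lex_cons_iff]

theorem lex_bump (q p : List ℕ) :
    List.Lex (· < ·) (bump q) (bump p) ↔ List.Lex (· < ·) q p := by
  cases q <;> cases p <;> simp [bump, List.cons_lex_cons_iff]

theorem bump_prefix_bump {q p : List ℕ} : bump p <+: bump q ↔ p <+: q := by
  cases q <;> cases p <;> simp [bump, List.cons_prefix_cons]

theorem not_lex_bump_zero {p q : List ℕ} (hq : q ≠ []) :
    ¬ List.Lex (· < ·) (bump q) (0 :: p) := by
  cases q <;> simp_all [bump, List.cons_lex_cons_iff]

theorem lex_zero_bump {p q : List ℕ} (hq : q ≠ []) : List.Lex (· < ·) (0 :: p) (bump q) := by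
  cases q <;> simp_all [bump, List.cons_lex_cons_iff]

theorem not_bump_prefix_zero {p q : List ℕ} (hq : q ≠ []) : ¬ bump q <+: 0 :: p := by
  cases q <;> simp_all [bump, List.cons_prefix_cons]

theorem not_zero_prefix_bump {p q : List ℕ} : ¬ 0 :: p <+: bump q := by
  cases q <;> simp_all [bump, List.cons_prefix_cons]

theorem leavesBefore_node {cs : List PTree} (hcs : cs ≠ []) (p : List ℕ) :
    leavesBefore (node cs) p = Nat.card {q : List ℕ // q ≠ [] ∧
      IsLeafAt (node cs) q ∧ List.Lex (· < ·) q p ∧ ¬ p <+: q} := by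
  exact Nat.card_congr
    (Equiv.subtypeEquivRight fun q => ⟨fun h => ⟨h.1.ne_nil hcs, h⟩, And.right⟩)

theorem leavesBefore_nil (t : PTree) : leavesBefore t [] = 0 := by
  have : IsEmpty {q : List ℕ // IsLeafAt t q ∧ List.Lex (· < ·) q [] ∧ ¬ [] <+: q} :=
    ⟨fun q => q.2.2.2 List.nil_prefix⟩
  exact Nat.card_of_isEmpty

theorem leavesBefore_cons_zero (c : PTree) (cs : List PTree) (p : List ℕ) :
    leavesBefore (node (c :: cs)) (0 :: p) = leavesBefore c p := by
  rw [leavesBefore_node (by simp),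
    natCard_path_split _ ((finite_isLeafAt _).subset fun q hq => hq.2.1)]
  have : IsEmpty {q : List ℕ // q ≠ [] ∧ IsLeafAt (node (c :: cs)) (bump q) ∧
      List.Lex (· < ·) (bump q) (0 :: p) ∧ ¬ 0 :: p <+: bump q} :=
    ⟨fun q => not_lex_bump_zero q.2.1 q.2.2.2.1⟩
  rw [Nat.card_of_isEmpty (α := {q : List ℕ // q ≠ [] ∧ _}), add_zero, leavesBefore]
  simp only [isLeafAt_cons_zero, lex_cons_zero, List.cons_prefix_cons, true_and]

theorem leavesBefore_cons_bump (c : PTree) {cs : List PTree} (hcs : cs ≠ []) {p : List ℕ}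
    (hp : p ≠ []) :
    leavesBefore (node (c :: cs)) (bump p) = numLeaves c + leavesBefore (node cs) p := by
  rw [leavesBefore_node (by simp),
    natCard_path_split _ ((finite_isLeafAt _).subset fun q hq => hq.2.1)]
  congr 1
  · simp only [isLeafAt_cons_zero, lex_zero_bump hp, not_bump_prefix_zero hp, not_false_eq_true,
      and_true]
    rfl
  · rw [leavesBefore_node hcs]
    refine Nat.card_congr (Equiv.subtypeEquivRight fun q => and_congr_right fun hq => ?_)
    rw [isLeafAt_cons_bump c _ hq, lex_bump, bump_prefix_bump]

theorem subtree!_cons_zero (c : PTree) (cs : List PTree) (p : List ℕ) :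
    subtree! (node (c :: cs)) (0 :: p) = subtree! c p := by
  rw [subtree!, subtreeAt_cons_zero, subtree!]

theorem subtree!_cons_bump (c : PTree) (cs : List PTree) {q : List ℕ} (hq : q ≠ []) :
    subtree! (node (c :: cs)) (bump q) = subtree! (node cs) q := by
  rw [subtree!, subtreeAt_cons_bump c cs hq, subtree!]

theorem subtree!_nil (t : PTree) : subtree! t [] = t := by
  rw [subtree!, subtreeAt_nil]; rfl

theorem leavesBefore_add_numLeaves_le (t : PTree) {q : List ℕ} (hq : IsVertex t q) :
    leavesBefore t q + numLeaves (subtree! t q) ≤ numLeaves t := by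
  induction t using induction_cons generalizing q with
  | nil =>
    obtain rfl : q = [] := not_not.1 fun hne => not_isVertex_node_nil hne hq
    rw [leavesBefore_nil, subtree!_nil, zero_add]
  | cons c cs ihc ihcs =>
    by_cases hne : q = []
    · rw [hne, leavesBefore_nil, subtree!_nil, zero_add]
    rcases exists_eq_cons_or_bump hne with ⟨p, rfl⟩ | ⟨p, hp, rfl⟩
    · rw [isVertex_cons_zero] at hq
      rw [leavesBefore_cons_zero, subtree!_cons_zero]
      exact (ihc hq).trans (numLeaves_le_numLeaves_node_cons c cs)
    · rw [isVertex_cons_bump c cs hp] at hq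
      have hcs : cs ≠ [] := by
        rintro rfl
        exact not_isVertex_node_nil hp hq
      rw [leavesBefore_cons_bump c hcs hp, subtree!_cons_bump c cs hp, numLeaves_node_cons c hcs,
        add_assoc]
      exact Nat.add_le_add_left (ihcs hq) _

theorem sectorIn_nil {t : PTree} {j : ℕ} : SectorIn t [] j ↔ j + 2 ≤ numLeaves t := by
  simp [SectorIn, leavesBefore_nil, subtree!_nil]

theorem SectorIn.le {t : PTree} {p : List ℕ} {j : ℕ} (h : SectorIn t p j)
    (hp : IsInternalAt t p) : j + 2 ≤ numLeaves t :=
  h.2.trans (leavesBefore_add_numLeaves_le t hp.isVertex)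

theorem sectorIn_cons_zero (c : PTree) (cs : List PTree) (p : List ℕ) (j : ℕ) :
    SectorIn (node (c :: cs)) (0 :: p) j ↔ SectorIn c p j := by
  rw [SectorIn, leavesBefore_cons_zero, subtree!_cons_zero, SectorIn]

theorem sectorIn_cons_bump (c : PTree) {cs : List PTree} (hcs : cs ≠ []) {q : List ℕ}
    (hq : q ≠ []) (j : ℕ) :
    SectorIn (node (c :: cs)) (bump q) j ↔
      numLeaves c ≤ j ∧ SectorIn (node cs) q (j - numLeaves c) := by
  rw [SectorIn, leavesBefore_cons_bump c hcs hq, subtree!_cons_bump c cs hq, SectorIn]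
  omega

theorem ownsSector_cons_zero (c : PTree) (cs : List PTree) (p : List ℕ) (j : ℕ) :
    OwnsSector (node (c :: cs)) (0 :: p) j ↔ OwnsSector c p j := by
  rw [OwnsSector, isInternalAt_cons_zero, sectorIn_cons_zero, OwnsSector]
  refine and_congr_right fun _ => and_congr_right fun _ => ⟨fun h w hw hpw hne => ?_,
    fun h w hw hpw hne => ?_⟩
  · rw [← sectorIn_cons_zero c cs]
    exact h (0 :: w) (by rwa [isInternalAt_cons_zero])
      (by rwa [List.cons_prefix_cons, and_iff_right rfl]) (by simpa using hne)
  · obtain ⟨s, rfl⟩ := hpw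
    rw [List.cons_append] at hw hne ⊢
    rw [isInternalAt_cons_zero] at hw
    rw [sectorIn_cons_zero]
    exact h _ hw (List.prefix_append _ _) (by simpa using hne)

theorem ownsSector_cons_bump (c : PTree) {cs : List PTree} {q : List ℕ}
    (hq : q ≠ []) (j : ℕ) :
    OwnsSector (node (c :: cs)) (bump q) j ↔
      numLeaves c ≤ j ∧ OwnsSector (node cs) q (j - numLeaves c) := by
  by_cases hcs : cs = []
  · subst hcs
    simp [OwnsSector, isInternalAt_cons_bump c _ hq, not_isInternalAt_node_nil]
  rw [OwnsSector, isInternalAt_cons_bump c cs hq, sectorIn_cons_bump c hcs hq, OwnsSector]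
  constructor
  · rintro ⟨hint, ⟨hle, hsec⟩, hdeep⟩
    refine ⟨hle, hint, hsec, fun w hw hqw hne hs => ?_⟩
    have hw₀ : w ≠ [] := fun hw₀ => hne (hw₀ ▸ (List.prefix_nil.1 (hw₀ ▸ hqw)).symm)
    exact hdeep (bump w) (by rwa [isInternalAt_cons_bump c cs hw₀]) (bump_prefix_bump.2 hqw)
      (bump_injective.ne hne) ((sectorIn_cons_bump c hcs hw₀ j).2 ⟨hle, hs⟩)
  · rintro ⟨hle, hint, hsec, hdeep⟩
    refine ⟨hint, ⟨hle, hsec⟩, fun w hw hqw hne hs => ?_⟩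
    have hw₀ : w ≠ [] := fun hw₀ => hne (hw₀ ▸ (List.prefix_nil.1 (hw₀ ▸ hqw)).symm)
    rcases exists_eq_cons_or_bump hw₀ with ⟨p, rfl⟩ | ⟨p, hp, rfl⟩
    · exact not_bump_prefix_zero hq hqw
    · rw [isInternalAt_cons_bump c cs hp] at hw
      exact hdeep p hw (bump_prefix_bump.1 hqw) (fun hpq => hne (congrArg bump hpq))
        ((sectorIn_cons_bump c hcs hp j).1 hs).2

theorem ownsSector_nil_iff {cs : List PTree} (hcs : cs ≠ []) (j : ℕ) :
    OwnsSector (node cs) [] j ↔ j + 2 ≤ numLeaves (node cs) ∧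
      ∀ w, w ≠ [] → IsInternalAt (node cs) w → ¬ SectorIn (node cs) w j := by
  rw [OwnsSector, isInternalAt_nil, sectorIn_nil]
  exact ⟨fun h => ⟨h.2.1, fun w hw hi => h.2.2 w hi List.nil_prefix hw⟩,
    fun h => ⟨hcs, h.1, fun w hi _ hw => h.2 w hw hi⟩⟩

theorem isInternalAt_nil_of_two_le {t : PTree} (h : 2 ≤ numLeaves t) : IsInternalAt t [] := by
  obtain ⟨cs⟩ := t
  rw [isInternalAt_nil]
  rintro rfl
  rw [numLeaves_leaf] at h
  omega

theorem not_ownsSector_nil_of_lt (c : PTree) (cs : List PTree) {j : ℕ}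
    (hj : j + 2 ≤ numLeaves c) : ¬ OwnsSector (node (c :: cs)) [] j := by
  rw [ownsSector_nil_iff (by simp)]
  rintro ⟨-, h⟩
  refine h [0] (by simp) ?_ ?_
  · rw [isInternalAt_cons_zero]
    exact isInternalAt_nil_of_two_le (by omega)
  · rwa [sectorIn_cons_zero, sectorIn_nil]

theorem not_ownsSector_singleton_nil (c : PTree) (j : ℕ) : ¬ OwnsSector (node [c]) [] j := by
  intro h
  refine not_ownsSector_nil_of_lt c [] ?_ h
  have := h.2.1
  rwa [sectorIn_nil, numLeaves_node_singleton] at this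

theorem ownsSector_nil_of_add_one_eq (c : PTree) {cs : List PTree} (hcs : cs ≠ []) {j : ℕ}
    (hj : j + 1 = numLeaves c) : OwnsSector (node (c :: cs)) [] j := by
  rw [ownsSector_nil_iff (by simp)]
  refine ⟨?_, fun w hw hi hs => ?_⟩
  · have := numLeaves_pos (node cs)
    rw [numLeaves_node_cons c hcs]
    omega
  · rcases exists_eq_cons_or_bump hw with ⟨p, rfl⟩ | ⟨p, hp, rfl⟩
    · rw [sectorIn_cons_zero] at hs
      rw [isInternalAt_cons_zero] at hi
      have := hs.le hi
      omega
    · rw [sectorIn_cons_bump c hcs hp] at hs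
      omega

theorem ownsSector_nil_of_le (c : PTree) {cs : List PTree} (hcs : cs ≠ []) {j : ℕ}
    (hj : numLeaves c ≤ j) :
    OwnsSector (node (c :: cs)) [] j ↔ OwnsSector (node cs) [] (j - numLeaves c) := by
  rw [ownsSector_nil_iff (by simp), ownsSector_nil_iff hcs, numLeaves_node_cons c hcs]
  refine and_congr (by omega) ⟨fun h w hw hi hs => ?_, fun h w hw hi hs => ?_⟩
  · exact h (bump w) (by rwa [Ne, bump_eq_nil]) (by rwa [isInternalAt_cons_bump c cs hw])
      ((sectorIn_cons_bump c hcs hw j).2 ⟨hj, hs⟩)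
  · rcases exists_eq_cons_or_bump hw with ⟨p, rfl⟩ | ⟨p, hp, rfl⟩
    · rw [sectorIn_cons_zero] at hs
      rw [isInternalAt_cons_zero] at hi
      have := hs.le hi
      omega
    · rw [isInternalAt_cons_bump c cs hp] at hi
      exact h p hp hi ((sectorIn_cons_bump c hcs hp j).1 hs).2

theorem OwnsSector.le {t : PTree} {p : List ℕ} {j : ℕ} (h : OwnsSector t p j) :
    j + 2 ≤ numLeaves t := h.2.1.le h.1

section Letters

variable {A : Type*} [Ring A]

open Classical in
/-- The letters of `w` at the positions satisfying `P`. -/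
noncomputable def select (P : ℕ → Prop) (w : List A) : List A :=
  ((List.range w.length).filter fun i => P i).map fun i => w.getD i 0

theorem select_congr {P Q : ℕ → Prop} {w : List A} (h : ∀ i < w.length, P i ↔ Q i) :
    select P w = select Q w := by
  unfold select
  congr 1
  exact List.filter_congr fun i hi => by simp [h i (List.mem_range.1 hi)]

theorem select_eq_nil {P : ℕ → Prop} {w : List A} (h : ∀ i < w.length, ¬ P i) :
    select P w = [] := by
  rw [select, List.map_eq_nil_iff, List.filter_eq_nil_iff]
  intro i hi
  simpa using h i (List.mem_range.1 hi)

theorem select_append (P : ℕ → Prop) (u v : List A) :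
    select P (u ++ v) = select P u ++ select (fun i => P (u.length + i)) v := by
  unfold select
  rw [List.length_append, List.range_add, List.filter_append, List.map_append, List.filter_map,
    List.map_map]
  congr 1
  · refine List.map_congr_left fun i hi => ?_
    rw [List.getD_append]
    exact List.mem_range.1 (List.mem_filter.1 hi).1
  · refine List.map_congr_left fun i _ => ?_
    simp [List.getElem?_append_right]

theorem select_singleton {P : ℕ → Prop} (s : A) (h : P 0) : select P [s] = [s] := by
  simp [select, h]

theorem select_singleton_of_not {P : ℕ → Prop} (s : A) (h : ¬ P 0) : select P [s] = [] := by
  simp [select, h]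

theorem select_append_cons (P : ℕ → Prop) (u r : List A) (s : A) :
    select P (u ++ s :: r) = select P u ++ (select (fun i => P (u.length + i)) [s] ++
      select (fun i => P (u.length + 1 + i)) r) := by
  rw [select_append, ← List.singleton_append, select_append]
  simp [add_assoc]

/-- The letters of `w` in the block of `π(node cs)` given by the root. -/
noncomputable def rootLetters (cs : List PTree) (w : List A) : List A :=
  select (OwnsSector (node cs) []) w

/-- The product of `φ` over the blocks of `π(node cs)` not given by the root, that is, over the
internal vertices of the forest `cs`. -/
noncomputable def forestPhi (φ : A → ℂ) (cs : List PTree) (w : List A) : ℂ :=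
  ∏ᶠ v ∈ {v | v ≠ [] ∧ IsInternalAt (node cs) v}, φ (select (OwnsSector (node cs) v) w).prod

theorem phiPi_eq (φ : A → ℂ) (t : PTree) (w : List A) :
    phiPi φ t w = ∏ᶠ v ∈ {v | IsInternalAt t v}, φ (select (OwnsSector t v) w).prod := rfl

theorem finite_forest_internal (cs : List PTree) :
    {v | v ≠ [] ∧ IsInternalAt (node cs) v}.Finite :=
  (finite_isInternalAt _).subset fun _ h => h.2

theorem phiPi_leaf (φ : A → ℂ) (w : List A) : phiPi φ leaf w = 1 := by
  rw [phiPi_eq]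
  simp [leaf, not_isInternalAt_node_nil]

theorem phiPi_node (φ : A → ℂ) {cs : List PTree} (hcs : cs ≠ []) (w : List A) :
    phiPi φ (node cs) w = φ (rootLetters cs w).prod * forestPhi φ cs w := by
  have hset : {v | IsInternalAt (node cs) v} =
      insert [] {v | v ≠ [] ∧ IsInternalAt (node cs) v} := by
    ext v
    by_cases hv : v = []
    · simp [hv, isInternalAt_nil, hcs]
    · simp [hv]
  rw [phiPi_eq, hset, finprod_mem_insert _ (by simp) (finite_forest_internal cs)]
  rfl

theorem forestPhi_cons (φ : A → ℂ) (c : PTree) (cs : List PTree) (w : List A) :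
    forestPhi φ (c :: cs) w =
      (∏ᶠ p ∈ {p | IsInternalAt c p}, φ (select (OwnsSector c p) w).prod) *
      ∏ᶠ q ∈ {q | q ≠ [] ∧ IsInternalAt (node cs) q},
        φ (select (fun j => numLeaves c ≤ j ∧ OwnsSector (node cs) q (j - numLeaves c))
          w).prod := by
  rw [forestPhi, finprod_mem_path_split _ (finite_forest_internal _)]
  congr 1
  · simp only [isInternalAt_cons_zero]
    refine finprod_mem_congr rfl fun p _ => ?_
    rw [select_congr fun i _ => ownsSector_cons_zero c cs p i]
  · refine finprod_mem_congr ?_ fun q hq => ?_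
    · ext q
      exact and_congr_right fun hq => isInternalAt_cons_bump c cs hq
    · rw [select_congr fun i _ => ownsSector_cons_bump c hq.1 i]

theorem forestPhi_singleton (φ : A → ℂ) (c : PTree) (w : List A) :
    forestPhi φ [c] w = phiPi φ c w := by
  rw [forestPhi_cons, phiPi_eq]
  simp [not_isInternalAt_node_nil]

theorem rootLetters_singleton (c : PTree) (w : List A) : rootLetters [c] w = [] :=
  select_eq_nil fun _ _ => not_ownsSector_singleton_nil c _

theorem forestPhi_cons_append (φ : A → ℂ) {c : PTree} (cs : List PTree)
    {u : List A} (hu : u.length + 1 = numLeaves c) (s : A) (r : List A) :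
    forestPhi φ (c :: cs) (u ++ s :: r) = phiPi φ c u * forestPhi φ cs r := by
  rw [forestPhi_cons, phiPi_eq, forestPhi]
  congr 1
  · refine finprod_mem_congr rfl fun p _ => ?_
    rw [select_append_cons, select_singleton_of_not, select_eq_nil (w := r), List.append_nil,
      List.append_nil]
    · intro i _ h
      have := h.le
      omega
    · intro h
      have := h.le
      omega
  · refine finprod_mem_congr rfl fun q _ => ?_
    rw [select_append_cons, select_eq_nil (w := u), select_singleton_of_not, List.nil_append,
      List.nil_append]
    · rw [select_congr]
      intro i _
      simp [hu]
    · omega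
    · intro i hi
      omega

theorem rootLetters_cons_append {c : PTree} {cs : List PTree} (hcs : cs ≠ [])
    {u : List A} (hu : u.length + 1 = numLeaves c) (s : A) (r : List A) :
    rootLetters (c :: cs) (u ++ s :: r) = s :: rootLetters cs r := by
  rw [rootLetters, select_append_cons, select_eq_nil (w := u), select_singleton, rootLetters,
    List.nil_append, List.singleton_append]
  · rw [select_congr]
    intro i _
    rw [ownsSector_nil_of_le c hcs (by omega), hu, Nat.add_sub_cancel_left]
  · exact ownsSector_nil_of_add_one_eq c hcs (by omega)
  · intro i hi
    exact not_ownsSector_nil_of_lt c cs (by omega)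

theorem rootLetters_cons_of_lt_length {c : PTree} {cs : List PTree} (hcs : cs ≠ []) {w : List A}
    {j : ℕ} (hj : j < w.length) (hc : numLeaves c = j + 1) :
    rootLetters (c :: cs) w = w[j] :: rootLetters cs (w.drop (j + 1)) := by
  rw [← rootLetters_cons_append hcs (u := w.take j) (by rw [List.length_take_of_le hj.le, hc]),
    List.cons_getElem_drop_succ, List.take_append_drop]

theorem forestPhi_cons_of_lt_length (φ : A → ℂ) {c : PTree} (cs : List PTree) {w : List A}
    {j : ℕ} (hj : j < w.length) (hc : numLeaves c = j + 1) :
    forestPhi φ (c :: cs) w = phiPi φ c (w.take j) * forestPhi φ cs (w.drop (j + 1)) := by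
  rw [← forestPhi_cons_append φ cs (u := w.take j) (by rw [List.length_take_of_le hj.le, hc]) w[j],
    List.cons_getElem_drop_succ, List.take_append_drop]

end Letters

section Skeleton

/-- The strict ancestor order on a set of vertices, given by their paths. -/
def Ancestor (R : List ℕ → Prop) (v w : {p // R p}) : Prop := v.1 <+: w.1 ∧ v ≠ w

/-- The number of labellings of the skeleton of `t` by `Fin N` that strictly increase away from the
root. -/
noncomputable def skelCount (t : PTree) (N : ℕ) : ℕ := strictCount (Ancestor (IsInternalAt t)) N

/-- The number of labellings of the skeletons of a forest by `Fin N` that strictly increase away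
from the roots. -/
noncomputable def forestCount (cs : List PTree) (N : ℕ) : ℕ :=
  strictCount (Ancestor fun q => q ≠ [] ∧ IsInternalAt (node cs) q) N

theorem strictCount_ancestor_congr {R S : List ℕ → Prop} (h : ∀ p, R p ↔ S p) (N : ℕ) :
    strictCount (Ancestor R) N = strictCount (Ancestor S) N := by
  obtain rfl : R = S := funext fun p => propext (h p)
  rfl

theorem skelCount_leaf (N : ℕ) : skelCount leaf N = 1 := by
  have : IsEmpty {p // IsInternalAt leaf p} := ⟨fun p => not_isInternalAt_node_nil p.2⟩
  exact strictCount_of_isEmpty _ N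

theorem skelCount_node_zero {cs : List PTree} (hcs : cs ≠ []) : skelCount (node cs) 0 = 0 := by
  have : Nonempty {p // IsInternalAt (node cs) p} := ⟨⟨[], isInternalAt_nil.2 hcs⟩⟩
  exact strictCount_zero _

theorem forestCount_nil (N : ℕ) : forestCount [] N = 1 := by
  have : IsEmpty {q // q ≠ [] ∧ IsInternalAt (node []) q} :=
    ⟨fun p => not_isInternalAt_node_nil p.2.2⟩
  exact strictCount_of_isEmpty _ N

theorem pathSplit_inl_val (R : List ℕ → Prop) (p : {p // R (0 :: p)}) :
    (pathSplit R (.inl p)).1 = 0 :: p.1 := rfl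

theorem pathSplit_inr_val (R : List ℕ → Prop) (q : {q // q ≠ [] ∧ R (bump q)}) :
    (pathSplit R (.inr q)).1 = bump q.1 := rfl

theorem forestCount_cons (c : PTree) (cs : List PTree) (N : ℕ) :
    forestCount (c :: cs) N = skelCount c N * forestCount cs N := by
  rw [forestCount, ← strictCount_congr (r := fun x y =>
    Ancestor _ (pathSplit (IsInternalAt (node (c :: cs))) x) (pathSplit _ y))
    (pathSplit (IsInternalAt (node (c :: cs)))) (fun _ _ => Iff.rfl), strictCount_sum]
  · congr 1
    · rw [skelCount, ← strictCount_ancestor_congr (isInternalAt_cons_zero c cs)]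
      refine strictCount_congr (Equiv.refl _) (fun v w => ?_) N
      simp [Ancestor, pathSplit_inl_val, List.cons_prefix_cons, Subtype.ext_iff]
    · rw [forestCount, ← strictCount_ancestor_congr fun q => and_congr_right fun hq =>
        isInternalAt_cons_bump c cs hq]
      refine strictCount_congr (Equiv.refl _) (fun v w => ?_) N
      simp [Ancestor, pathSplit_inr_val, bump_prefix_bump, Subtype.ext_iff]
  · exact fun x y h => not_zero_prefix_bump h.1
  · exact fun x y h => not_bump_prefix_zero x.2.1 h.1

/-- The decomposition of the vertices of a tree into the root, as `none`, and the others. -/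
noncomputable def rootSplit {R : List ℕ → Prop} (hR : R []) :
    Option {q // q ≠ [] ∧ R q} ≃ {q // R q} :=
  Equiv.ofBijective (fun x => x.elim ⟨[], hR⟩ fun q => ⟨q.1, q.2.2⟩) <| by
    constructor
    · rintro (_ | ⟨p, hp⟩) (_ | ⟨q, hq⟩) h
      · rfl
      · exact absurd (congrArg Subtype.val h).symm hq.1
      · exact absurd (congrArg Subtype.val h) hp.1
      · have h : p = q := congrArg Subtype.val h
        subst h
        rfl
    · rintro ⟨q, hq⟩
      by_cases h : q = []
      · subst h
        exact ⟨none, rfl⟩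
      · exact ⟨some ⟨q, h, hq⟩, rfl⟩

theorem rootSplit_some_val {R : List ℕ → Prop} (hR : R []) (q : {q // q ≠ [] ∧ R q}) :
    (rootSplit hR (some q)).1 = q.1 := rfl

theorem skelCount_node_succ {cs : List PTree} (hcs : cs ≠ []) (N : ℕ) :
    skelCount (node cs) (N + 1) = skelCount (node cs) N + forestCount cs N := by
  have hfin : Finite {q // q ≠ [] ∧ IsInternalAt (node cs) q} := finite_forest_internal cs
  let split := rootSplit (R := IsInternalAt (node cs)) (isInternalAt_nil.2 hcs)
  have hsplit := strictCount_congr (r := fun x y => Ancestor _ (split x) (split y)) split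
    fun _ _ => Iff.rfl
  rw [skelCount, skelCount, ← hsplit, ← hsplit, strictCount_option_succ]
  · congr 1
    refine strictCount_congr (Equiv.refl _) (fun v w => ?_) N
    simp [Ancestor, split, rootSplit_some_val, Subtype.ext_iff]
  · intro x
    refine ⟨List.nil_prefix, fun h => ?_⟩
    exact x.2.1 (congrArg Subtype.val h).symm
  · rintro x ⟨hprefix, hne⟩
    exact hne (Subtype.ext (List.prefix_nil.1 hprefix))

end Skeleton

section SchroderForests

/-- The nonempty forests of Schröder trees with `m + 1` leaves in total. -/
def schroderForests (m : ℕ) : Set (List PTree) :=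
  {cs | cs ≠ [] ∧ (∀ c ∈ cs, IsSchroder c) ∧ (cs.map numLeaves).sum = m + 1}

/-- The forests of Schröder trees that are the children of the root of a tree in `ST m`: those in
`schroderForests m` with at least two trees. -/
def schroderChildren (m : ℕ) : Set (List PTree) := {cs ∈ schroderForests m | 2 ≤ cs.length}

theorem schroderForests_eq (m : ℕ) :
    schroderForests m = (fun c => [c]) '' ST m ∪ schroderChildren m := by
  ext cs
  simp only [schroderForests, schroderChildren, ST, Set.mem_union, Set.mem_image,
    Set.mem_ofPred_eq]
  rcases cs with _ | ⟨c, _ | ⟨d, cs⟩⟩ <;> simp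

theorem mem_schroderChildren_cons {m : ℕ} {c : PTree} {cs : List PTree} :
    c :: cs ∈ schroderChildren m ↔ ∃ j < m, c ∈ ST j ∧ cs ∈ schroderForests (m - j - 1) := by
  constructor
  · rintro ⟨⟨-, hschroder, hsum⟩, hlength⟩
    rcases cs with _ | ⟨d, cs⟩
    · simp at hlength
    have hc := numLeaves_pos c
    have hd := numLeaves_pos d
    rw [List.forall_mem_cons] at hschroder
    simp only [List.map_cons, List.sum_cons] at hsum
    refine ⟨numLeaves c - 1, by omega, ⟨hschroder.1, by omega⟩, by simp, hschroder.2, ?_⟩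
    simp only [List.map_cons, List.sum_cons]
    omega
  · rintro ⟨j, hj, ⟨hc, hleaves⟩, hne, hcs, hsum⟩
    refine ⟨⟨by simp, List.forall_mem_cons.2 ⟨hc, hcs⟩, ?_⟩, ?_⟩
    · rw [List.map_cons, List.sum_cons]
      omega
    · exact Nat.succ_le_succ (List.length_pos_iff.2 hne)

theorem ne_nil_of_mem_schroderChildren {m : ℕ} {cs : List PTree} (h : cs ∈ schroderChildren m) :
    cs ≠ [] := h.1.1

theorem node_mem_ST {m : ℕ} {cs : List PTree} (hcs : cs ≠ []) :
    node cs ∈ ST m ↔ cs ∈ schroderChildren m := by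
  simp only [ST, schroderChildren, schroderForests, Set.mem_ofPred_eq, numLeaves_node hcs]
  constructor
  · rintro ⟨hnode, hsum⟩
    cases hnode with
    | leaf => exact absurd rfl hcs
    | node _ hlength hschroder => exact ⟨⟨hcs, hschroder, hsum⟩, hlength⟩
  · rintro ⟨⟨-, hschroder, hsum⟩, hlength⟩
    exact ⟨.node cs hlength hschroder, hsum⟩

theorem leaf_mem_ST {m : ℕ} : leaf ∈ ST m ↔ m = 0 := by
  simp [ST, numLeaves_leaf, IsSchroder.leaf, eq_comm]

theorem schroderChildren_zero : schroderChildren 0 = ∅ := by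
  refine Set.eq_empty_iff_forall_notMem.2 fun cs hcs => ?_
  rcases cs with _ | ⟨c, cs⟩
  · exact ne_nil_of_mem_schroderChildren hcs rfl
  · obtain ⟨j, hj, -⟩ := mem_schroderChildren_cons.1 hcs
    exact Nat.not_lt_zero j hj

theorem ST_zero : ST 0 = {leaf} := by
  refine Set.eq_singleton_iff_unique_mem.2 ⟨leaf_mem_ST.2 rfl, ?_⟩
  rintro ⟨cs⟩ h
  by_contra hcs
  rw [node_mem_ST fun hnil => hcs (congrArg node hnil), schroderChildren_zero] at h
  exact h

theorem ST_eq_image {m : ℕ} (hm : m ≠ 0) : ST m = node '' schroderChildren m := by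
  ext ⟨cs⟩
  by_cases hcs : cs = []
  · subst hcs
    refine iff_of_false (fun h => hm (leaf_mem_ST.1 h)) ?_
    rintro ⟨cs, hcs, heq⟩
    exact ne_nil_of_mem_schroderChildren hcs (node.inj heq)
  · rw [node_mem_ST hcs, node_injective.mem_set_image]

theorem finite_schroder (m : ℕ) :
    (ST m).Finite ∧ (schroderForests m).Finite ∧ (schroderChildren m).Finite := by
  induction m using Nat.strong_induction_on with
  | _ m ih =>
    have hchildren : (schroderChildren m).Finite := by
      refine ((Set.finite_lt_nat m).biUnion fun j (hj : j < m) => ((ih j hj).1.prod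
        (ih (m - j - 1) (by omega)).2.1).image fun p => p.1 :: p.2).subset ?_
      rintro (_ | ⟨c, cs⟩) hcs
      · exact absurd rfl (ne_nil_of_mem_schroderChildren hcs)
      · obtain ⟨j, hj, hmem⟩ := mem_schroderChildren_cons.1 hcs
        exact Set.mem_biUnion hj ⟨(c, cs), hmem, rfl⟩
    have hST : (ST m).Finite := by
      rcases eq_or_ne m 0 with rfl | hm
      · rw [ST_zero]
        exact Set.finite_singleton _
      · rw [ST_eq_image hm]
        exact hchildren.image _
    refine ⟨hST, ?_, hchildren⟩
    rw [schroderForests_eq]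
    exact (hST.image _).union hchildren

/-- `ST m` as a `Finset`, for summation. -/
noncomputable def treesFinset (m : ℕ) : Finset PTree := (finite_schroder m).1.toFinset

/-- `schroderForests m` as a `Finset`, for summation. -/
noncomputable def forestsFinset (m : ℕ) : Finset (List PTree) := (finite_schroder m).2.1.toFinset

/-- `schroderChildren m` as a `Finset`, for summation. -/
noncomputable def childrenFinset (m : ℕ) : Finset (List PTree) :=
  (finite_schroder m).2.2.toFinset

theorem mem_treesFinset {m : ℕ} {t : PTree} : t ∈ treesFinset m ↔ t ∈ ST m :=
  Set.Finite.mem_toFinset _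

theorem mem_forestsFinset {m : ℕ} {cs : List PTree} :
    cs ∈ forestsFinset m ↔ cs ∈ schroderForests m :=
  Set.Finite.mem_toFinset _

theorem mem_childrenFinset {m : ℕ} {cs : List PTree} :
    cs ∈ childrenFinset m ↔ cs ∈ schroderChildren m :=
  Set.Finite.mem_toFinset _

theorem treesFinset_zero : treesFinset 0 = {leaf} := by
  ext t
  rw [mem_treesFinset, ST_zero, Set.mem_singleton_iff, Finset.mem_singleton]

section Sums

variable {M : Type*} [AddCommMonoid M]

theorem sum_treesFinset {m : ℕ} (hm : m ≠ 0) (f : PTree → M) :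
    ∑ t ∈ treesFinset m, f t = ∑ cs ∈ childrenFinset m, f (node cs) := by
  classical
  have himage : treesFinset m = (childrenFinset m).image node := by
    ext t
    simp only [mem_treesFinset, ST_eq_image hm, Set.mem_image, Finset.mem_image, mem_childrenFinset]
  rw [himage, Finset.sum_image node_injective.injOn]

theorem sum_forestsFinset (m : ℕ) (f : List PTree → M) :
    ∑ cs ∈ forestsFinset m, f cs = ∑ c ∈ treesFinset m, f [c] + ∑ cs ∈ childrenFinset m, f cs := by
  classical
  have hunion : forestsFinset m = (treesFinset m).image (fun c => [c]) ∪ childrenFinset m := by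
    ext cs
    simp only [mem_forestsFinset, schroderForests_eq, Set.mem_union, Set.mem_image,
      Finset.mem_union, Finset.mem_image, mem_treesFinset, mem_childrenFinset]
  rw [hunion, Finset.sum_union, Finset.sum_image List.singleton_injective.injOn]
  rw [Finset.disjoint_left]
  intro cs hsingleton hchildren
  obtain ⟨c, -, rfl⟩ := Finset.mem_image.1 hsingleton
  simpa using (mem_childrenFinset.1 hchildren).2

theorem sum_childrenFinset (m : ℕ) (f : List PTree → M) :
    ∑ cs ∈ childrenFinset m, f cs = ∑ j ∈ Finset.range m, ∑ c ∈ treesFinset j,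
      ∑ cs ∈ forestsFinset (m - j - 1), f (c :: cs) := by
  simp_rw [← Finset.sum_product', Finset.sum_sigma']
  symm
  refine Finset.sum_bij (fun x _ => x.2.1 :: x.2.2) ?_ ?_ ?_ fun _ _ => rfl
  · rintro ⟨j, c, cs⟩ h
    simp only [Finset.mem_sigma, Finset.mem_product, Finset.mem_range, mem_treesFinset,
      mem_forestsFinset] at h
    exact mem_childrenFinset.2 (mem_schroderChildren_cons.2 ⟨j, h⟩)
  · rintro ⟨j, c, cs⟩ h ⟨j', c', cs'⟩ h' heq
    simp only [Finset.mem_sigma, Finset.mem_product, mem_treesFinset] at h h'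
    simp only [List.cons.injEq] at heq
    obtain ⟨rfl, rfl⟩ := heq
    obtain rfl : j = j' := Nat.succ.inj (h.2.1.2.symm.trans h'.2.1.2)
    rfl
  · rintro (_ | ⟨c, cs⟩) hcs
    · exact absurd rfl (ne_nil_of_mem_schroderChildren (mem_childrenFinset.1 hcs))
    · obtain ⟨j, hj, hmem⟩ := mem_schroderChildren_cons.1 (mem_childrenFinset.1 hcs)
      refine ⟨⟨j, c, cs⟩, ?_, rfl⟩
      simpa only [Finset.mem_sigma, Finset.mem_product, Finset.mem_range, mem_treesFinset,
        mem_forestsFinset] using ⟨hj, hmem⟩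

end Sums

variable {A : Type*} [Ring A]

/-- The sum over the Schröder trees `t` with one sector per letter of `w` of `φ_{π(t)}(w)`, weighted
by the number of strict labellings of the skeleton of `t` by `Fin N`. -/
noncomputable def treeSum (φ : A → ℂ) (N : ℕ) (w : List A) : ℂ :=
  ∑ t ∈ treesFinset w.length, (skelCount t N : ℂ) * phiPi φ t w

theorem treeSum_nil (φ : A → ℂ) (N : ℕ) : treeSum φ N [] = 1 := by
  rw [treeSum, List.length_nil, treesFinset_zero, Finset.sum_singleton, skelCount_leaf, phiPi_leaf,
    Nat.cast_one, one_mul]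

theorem treeSum_zero (φ : A → ℂ) (w : List A) : treeSum φ 0 w = emptyWord w := by
  cases w with
  | nil => exact treeSum_nil φ 0
  | cons a w =>
    rw [treeSum, sum_treesFinset (by simp)]
    refine Finset.sum_eq_zero fun cs hcs => ?_
    rw [skelCount_node_zero (ne_nil_of_mem_schroderChildren (mem_childrenFinset.1 hcs)),
      Nat.cast_zero, zero_mul]

theorem forest_sum_eq_gapConv (φ : A → ℂ) (N : ℕ) (w : List A) (F : List A → ℂ) :
    ∑ cs ∈ forestsFinset w.length,
      (forestCount cs N : ℂ) * (F (rootLetters cs w) * forestPhi φ cs w) =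
    gapConv F (treeSum φ N) w := by
  induction hw : w.length using Nat.strong_induction_on generalizing w F with
  | _ m ih =>
    subst hw
    rw [gapConv, gapSum_eq_add_sum_range, sum_forestsFinset, sum_childrenFinset]
    congr 1
    · rw [treeSum, Finset.mul_sum]
      refine Finset.sum_congr rfl fun c _ => ?_
      rw [forestCount_cons, forestCount_nil, rootLetters_singleton, forestPhi_singleton, mul_one,
        mul_left_comm]
    · refine Finset.sum_congr rfl fun j hj => ?_
      have hj : j < w.length := Finset.mem_range.1 hj
      have htake : (w.drop j).take 1 = [w[j]] := by
        rw [List.drop_eq_getElem_cons hj, List.take_succ_cons, List.take_zero]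
      rw [← ih (w.length - j - 1) (by omega) (w.drop (j + 1)) _ (List.length_drop ..), treeSum,
        List.length_take_of_le hj.le, Finset.sum_mul_sum]
      refine Finset.sum_congr rfl fun c hc => Finset.sum_congr rfl fun cs hcs => ?_
      have hleaves : numLeaves c = j + 1 := (mem_treesFinset.1 hc).2
      rw [rootLetters_cons_of_lt_length (mem_forestsFinset.1 hcs).1 hj hleaves,
        forestPhi_cons_of_lt_length φ cs hj hleaves, forestCount_cons, htake,
        List.singleton_append, Nat.cast_mul]
      ring

theorem rootLetters_ne_nil {w : List A} {cs : List PTree} (hcs : cs ∈ schroderChildren w.length) :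
    rootLetters cs w ≠ [] := by
  rcases cs with _ | ⟨c, cs⟩
  · exact absurd rfl (ne_nil_of_mem_schroderChildren hcs)
  · obtain ⟨j, hj, hc, hforest⟩ := mem_schroderChildren_cons.1 hcs
    rw [rootLetters_cons_of_lt_length hforest.1 hj hc.2]
    exact List.cons_ne_nil _ _

theorem treeSum_succ {φ : A → ℂ} {F : List A → ℂ} (hnil : F [] = 1)
    (hF : ∀ u ≠ [], F u = φ u.prod) (N : ℕ) (w : List A) :
    treeSum φ (N + 1) w = gapConv F (treeSum φ N) w := by
  rcases eq_or_ne w [] with rfl | hw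
  · rw [gapConv, gapSum, hnil, one_mul, treeSum_nil, treeSum_nil]
  have hlength : w.length ≠ 0 := List.length_eq_zero_iff.not.2 hw
  have hnode : ∀ cs ∈ childrenFinset w.length,
      (skelCount (node cs) (N + 1) : ℂ) * phiPi φ (node cs) w =
      (skelCount (node cs) N : ℂ) * phiPi φ (node cs) w +
        (forestCount cs N : ℂ) * (F (rootLetters cs w) * forestPhi φ cs w) := fun cs hcs => by
    rw [mem_childrenFinset] at hcs
    rw [skelCount_node_succ (ne_nil_of_mem_schroderChildren hcs), Nat.cast_add, add_mul,
      hF _ (rootLetters_ne_nil hcs), ← phiPi_node φ (ne_nil_of_mem_schroderChildren hcs)]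
  rw [← forest_sum_eq_gapConv, sum_forestsFinset, treeSum, sum_treesFinset hlength,
    Finset.sum_congr rfl hnode, Finset.sum_add_distrib,
    ← sum_treesFinset hlength fun t => (skelCount t N : ℂ) * phiPi φ t w]
  simp only [forestCount_cons, forestCount_nil, mul_one, rootLetters_singleton, hnil, one_mul,
    forestPhi_singleton]

end SchroderForests

section SkeletonPolynomial

open Polynomial

/-- The polynomial whose value at `N` is the number of strict labellings of the skeleton of `t` by
`Fin N`. -/
noncomputable def skelPoly (t : PTree) : ℂ[X] := strictPoly ℂ (Ancestor (IsInternalAt t))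

theorem eval_natCast_skelPoly (t : PTree) (N : ℕ) :
    (skelPoly t).eval (N : ℂ) = skelCount t N := by
  have : Finite {p // IsInternalAt t p} := finite_isInternalAt t
  exact eval_natCast_strictPoly ℂ _ N

theorem coeff_one_skelPoly (t : PTree) : (skelPoly t).coeff 1 = omegaSk t := by
  rw [skelPoly, coeff_one_strictPoly, omegaSk, numInternal]
  simp only [omegaSkK, strictSurjCount, Ancestor, and_imp]

end SkeletonPolynomial

end PTree

end Paths

section Conclusion

open Polynomial

variable {A : Type*} [Ring A] {φ : A → ℂ} {h : List A → ℂ}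

theorem MonotoneMC.eval_one_ncPoly (hmc : MonotoneMC φ h) {w : List A} (hw : w ≠ []) :
    (ncPoly h w).eval 1 = φ w.prod := by
  rw [← List.ofFn_get w, _root_.eval_one_ncPoly, hmc _ (List.length_pos_iff.2 hw)]

theorem MonotoneMC.eval_natCast_ncPoly (hmc : MonotoneMC φ h) (N : ℕ) (w : List A) :
    (ncPoly h w).eval (N : ℂ) = PTree.treeSum φ N w := by
  have hgen := isGeneratedBy_ncPoly h
  induction N generalizing w with
  | zero => rw [Nat.cast_zero, hgen.eval_zero, PTree.treeSum_zero]
  | succ N ih =>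
    rw [PTree.treeSum_succ (by rw [hgen.nil, eval_one]) fun u => hmc.eval_one_ncPoly,
      Nat.cast_succ, add_comm, hgen.eval_add]
    simp only [ih]

theorem MonotoneMC.ncPoly_eq_sum_treesFinset (hmc : MonotoneMC φ h) (w : List A) :
    ncPoly h w =
      ∑ t ∈ PTree.treesFinset w.length, PTree.skelPoly t * C (PTree.phiPi φ t w) := by
  refine eq_of_infinite_eval_eq _ _
    ((Set.infinite_range_of_injective (Nat.cast_injective (R := ℂ))).mono ?_)
  rintro _ ⟨N, rfl⟩
  rw [Set.mem_ofPred_eq, hmc.eval_natCast_ncPoly, PTree.treeSum, eval_finsetSum]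
  simp only [eval_mul, eval_C, PTree.eval_natCast_skelPoly]

end Conclusion

theorem monotone_cumulants_eq_sum_schroder_trees_general {A : Type*} [Ring A] {φ : A → ℂ}
    {h : List A → ℂ} (hmc : MonotoneMC φ h) {n : ℕ} (hn : 1 ≤ n) (a : Fin n → A) :
    h (List.ofFn a) = ∑ᶠ t ∈ PTree.ST n, PTree.omegaSk t * PTree.phiPi φ t (List.ofFn a) := by
  classical
  have hne : List.ofFn a ≠ [] := by
    rw [Ne, List.ofFn_eq_nil_iff]
    omega
  calc
    h (List.ofFn a) = (ncPoly h (List.ofFn a)).coeff 1 := by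
      rw [(isGeneratedBy_ncPoly h).coeff_one, Function.update_of_ne hne]
    _ = ∑ t ∈ PTree.treesFinset n, PTree.omegaSk t * PTree.phiPi φ t (List.ofFn a) := by
      rw [hmc.ncPoly_eq_sum_treesFinset, List.length_ofFn, Polynomial.finsetSum_coeff]
      simp only [Polynomial.coeff_mul_C, PTree.coeff_one_skelPoly]
    _ = ∑ᶠ t ∈ PTree.ST n, PTree.omegaSk t * PTree.phiPi φ t (List.ofFn a) :=
      (finsum_mem_eq_finite_toFinset_sum _ (PTree.finite_schroder n).1).symm

/-- Let `(A, φ)` be a noncommutative probability space with monotone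
cumulants `{h_n}`. Then for every `n ≥ 1` and all `a_1, …, a_n ∈ A`,
`h_n(a_1,…,a_n) = Σ_{t ∈ ST(n)} ω(sk(t)) · φ_{π(t)}(a_1,…,a_n)`. -/
theorem monotone_cumulants_eq_sum_schroder_trees
    (A : Type*) [Ring A] [Algebra ℂ A] (φ : A →ₗ[ℂ] ℂ) (hφ : φ 1 = 1)
    (h : List A → ℂ) (hmc : MonotoneMC (fun x => φ x) h)
    (n : ℕ) (hn : 1 ≤ n) (a : Fin n → A) :
    h (List.ofFn a) =
      ∑ᶠ t ∈ PTree.ST n, PTree.omegaSk t * PTree.phiPi (fun x => φ x) t (List.ofFn a) :=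
  monotone_cumulants_eq_sum_schroder_trees_general hmc hn a
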